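/- With the setup below, for every line ℓ of PG(2,8) and every W-orbit 𝓞 on 𝓑', the imprint I(𝓞,ℓ) = {π ∩ ℓ : π ∈ 𝓞, |π ∩ ℓ| = 3} has exactly 7 elements. -/

import Mathlib

/-!
Let `B` be a block outside `Σ`. Multiplication by `F9ˣ` permutes the blocks and the planes
(two-dimensional `𝔽_2`-subspaces). As every plane lies in a single block and the members of `Σ` are
blocks, `B` meets each `xK` in at most two elements, so that `π_B` is a Fano plane of seven points,
each of its seven planes spans a line of `PG(2,8)`, and these planes are pairwise inequivalent under
`F9ˣ`. The theorem follows once `B` is known to be contained in no line: then the seven planes of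
`B` span seven distinct lines, each of which can be moved onto `ℓ`, up to `K`, in exactly one way; a
member of the `W`-orbit of `π_B` meets `ℓ` in three points exactly when it is one of the resulting
seven translates, and `π ∩ ℓ` determines the plane it comes from (`Design.ncard_imprint`).

That no block is contained in a line (`Design.not_subset_line`) is a finite computation. The planes
of `F9` fall into 85 classes under `F9ˣ`, called columns: column `0` consists of the planes inside
some `xK`, and the columns `1, …, 84` are regular orbits. A block outside `Σ` yields a row, the set
of the columns of its seven planes, and the rows of the design partition the columns
`1, …, 84`. So the design is an exact cover of 84 columns by 12 of the rows listed in
`Search.rowTable`. Up to the Frobenius automorphism, a block contained in a line has one of the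
eight rows of `Search.degRows`, and an exhaustive search shows that none of these extends to an
exact cover.

The search (`Search.engine`) is written for evaluation by the kernel: the state is one natural
number, consisting of 85 fields of 363 bits, in which field `t` lists the remaining candidate rows
through column `t`, so that a single bitwise operation restricts all columns to the rows compatible
with a newly chosen one. Its soundness is `Search.part_sound`, and its runs are
`Search.checks`. Arithmetic in `F9` is carried out on exponents of a root `α` of
`X ^ 9 + X ^ 4 + 1`, with Zech logarithms for the addition.
-/

noncomputable section

/-- `F9` is the field `𝔽_{2^9}`, viewed as a 9-dimensional vector space over `𝔽_2`. -/
abbrev F9 := GaloisField 2 9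

/-- The subfield `K` of order 8 of `𝔽_{2^9}`, as a set: `K = {x : x^8 = x}`. -/
def Kset : Set F9 := {x | x ^ 8 = x}

/-- The 1-dimensional `K`-subspace `xK` of `F9` spanned by `x`; for `x ≠ 0` these are
the points of `PG(2,8)` (with `F9` viewed as a 3-dimensional `K`-vector space). -/
def pt (x : F9) : Set F9 := {y | ∃ c ∈ Kset, y = x * c}

/-- `P` is a point of `PG(2,8)`: a 1-dimensional `K`-subspace `xK` with `x ≠ 0`. -/
def PGpoint (P : Set F9) : Prop := ∃ x : F9, x ≠ 0 ∧ P = pt x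

/-- `L` is a line of `PG(2,8)`: a 2-dimensional `K`-subspace `xK + yK` with `x, y`
linearly independent over `K`. -/
def PGline (L : Set F9) : Prop :=
  ∃ x y : F9, x ≠ 0 ∧ y ∉ pt x ∧ L = {z | ∃ a ∈ Kset, ∃ b ∈ Kset, z = x * a + y * b}

/-- `Σ`: the members of the design which are of the form `xK` (the Desarguesian
2-spread), viewed as `𝔽_2`-subspaces of `F9`. -/
def SigmaSet : Set (Submodule (ZMod 2) F9) := {S | ∃ x : F9, x ≠ 0 ∧ (S : Set F9) = pt x}

/-- `𝓑` is a cyclic 2-analog of a `(9,3,1)`-design: a set of 3-dimensional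
`𝔽_2`-subspaces of `F9` such that every 2-dimensional `𝔽_2`-subspace is contained in
exactly one member, invariant under multiplication by the generator `g` of `F9^*`. -/
def IsCyclicTwoAnalog (g : F9) (𝓑 : Set (Submodule (ZMod 2) F9)) : Prop :=
  (∀ x : F9, x ≠ 0 → ∃ m : ℕ, g ^ m = x) ∧
  (∀ S ∈ 𝓑, Module.finrank (ZMod 2) S = 3) ∧
  (∀ T : Submodule (ZMod 2) F9, Module.finrank (ZMod 2) T = 2 → ∃! S, S ∈ 𝓑 ∧ T ≤ S) ∧
  (∀ S ∈ 𝓑, ∃ S' ∈ 𝓑, (S' : Set F9) = (fun x => g * x) '' (S : Set F9))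

/-- `π_B`: the set of points `xK` of `PG(2,8)` with `x` a nonzero element of `B`. -/
def piB (B : Submodule (ZMod 2) F9) : Set (Set F9) :=
  {P | ∃ x ∈ (B : Set F9), x ≠ 0 ∧ P = pt x}

/-- `𝓑' = {π_B : B ∈ 𝓑 \ Σ}`. -/
def Bprime (𝓑 : Set (Submodule (ZMod 2) F9)) : Set (Set (Set F9)) :=
  {π | ∃ B ∈ 𝓑 \ SigmaSet, π = piB B}

/-- The permutation `w : xK ↦ (gx)K` of the points of `PG(2,8)`. -/
def wmap (g : F9) (P : Set F9) : Set F9 := (fun x => g * x) '' P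

/-- The induced action of `w` on blocks (sets of points) of `PG(2,8)`. -/
def wact (g : F9) (π : Set (Set F9)) : Set (Set F9) := wmap g '' π

/-- The orbit of a block `π` under the group `W = ⟨w⟩`. -/
def Worbit (g : F9) (π : Set (Set F9)) : Set (Set (Set F9)) :=
  {ρ | ∃ m : ℕ, (wact g)^[m] π = ρ}

/-- `π ∩ ℓ`: the set of points of `π` contained (as `K`-subspaces) in the line `L`. -/
def lineSec (π : Set (Set F9)) (L : Set F9) : Set (Set F9) := {P ∈ π | P ⊆ L}

/-- The imprint `I(𝓞,ℓ) = {π ∩ ℓ : π ∈ 𝓞, |π ∩ ℓ| = 3}` of an orbit `𝓞` on a line `L`. -/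
def imprint (O : Set (Set (Set F9))) (L : Set F9) : Set (Set (Set F9)) :=
  {s | ∃ π ∈ O, (lineSec π L).ncard = 3 ∧ s = lineSec π L}

/-- The sublines `PG(1,2)` of a line `L`: the 3-element sets of points
`{xK, yK, (x+y)K}` with `x, y ∈ L` linearly independent over `K`. -/
def sublines (L : Set F9) : Set (Set (Set F9)) :=
  {s | ∃ x y : F9, x ∈ L ∧ y ∈ L ∧ x ≠ 0 ∧ y ∉ pt x ∧ s = {pt x, pt y, pt (x + y)}}

end

namespace Search

noncomputable section

/-! ### Tables -/

/-- Zech logarithms in 12-bit entries: if the `n`-th entry is `z`, then `1 + α ^ n = α ^ z`. -/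
def zechTable : ℕ :=
  2596421899924212166948140544818001780218262637128162885301659900952122435861107210459855102516508641413873867615962482695554604255767700028342129180856589343261941107979750886612588781412650030887882191561791623698686124376366161156359080088904881264054264062886615449331266361621556384768291771078027437492616461846302632133975547423562182220910431575482325302688997485825948070794489794120537740685633312256119594969100191252887449613345072974332521697007480747335869215103058251359010712021370338560663523485050030498284145001910184496356879370187247612630795069908440457720160477645139835356017432732999042149520750595393988445308696071761438925272236171820519733537687030899100633689410290740910911749456765015663193091524209972408299047904221952115336938151463669420119477266362366924548062006976095944978609571543455995060197901356872056650971160884686376777067451485802149133753454340993341778679206095587881256269752282285738357443385181002621516424568562673223199715041405872384306915438641979023377202389898455743616327888816556308451081555898170380460632432699903869222716722152328193266082917088660600884367973820016038217026044580002491984134097824924974279054781791105291635056128496226048477191512864394911953076537834180291154521194512061884152039553573654869575177497863310312049990952146619583498474164333010881640310216047355664029048108426537798651820193604669375146128993201117262996649747210587534796146428527501362717557624725138613948183395780279715724040063520718948948800824625883078214452981688851450166080396962553444963125789143081096103775936440153745174424033645504494423198418193606986400222230872902098067696129807106006295654957442875016822044595048198899163066406244491295860883577792134403879885442978890331798367960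41208727503866330739983008535037118588981075388305927544476651478880786244488889206256967680

/-- The `n`-th byte is the column of the multiples of the plane `⟨1, α ^ n⟩`. -/
def idTable : ℕ :=
  16061343808857157049388370502419930400999306217075834131776935625730528980522996534983344106680022065967709665670820193547140849014301738011768804658882840827665289573954378261598589626111059031766054068888269678750739417688381278657702157130460980271467207579784945202466058844802103450904667316255908748843749372519880007232101061799779505721801974081905923048240805558699551457387791706793437122640626868399943008435707041420653397914163948818226652938982424508229947402276130207496476839494431787479764992752885569112337399714462513048351273612476846403641870571532390453699744932456709266725112379883270753514851739636251474322469470989917713617114491871585003300653432808908532149888891363049325303611187283748083450606788538437503639615663815554090321447554103671840247518614934344761157011082033797474247018658980989908574206938672812828678549306797420970360875625345398587154542265478294442372812948621261303165168154370317611732018129746423616737857013633976967965251566656382875437868573996030319957405348127231956230591412184079214563126482308568801038400196615319605305617314611756339096783863107501444776217226275643872972352187872662522134158477549981445088508737783453290095989142494036683624335277809396709720320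

/-- In 12-bit entries, for each column `t` an exponent `r` such that `⟨1, α ^ r⟩` is in column
`t`. -/
def repTable : ℕ :=
  428018155010770695131540902805880811873968646757717058868398924621588339342345821599262464409197495946539287152297597799269535896756182066856903121069351152929861080480027977894350569164790556173549666299775934648819934427762706088485895493780444062025345120068156407390384556326095122516724521423320649801

/-- The field of a top bit `2 ^ (363 * t + 362)`, stored in the byte whose index is the residue of
that power of two modulo `101`. -/
def colTable : ℕ :=
  506851217741206516405642446401005072200942329697279735964857064847475433771989830519331278953645621271521376808957470608587076653287212440466243893201273396250148678844169222278564134489305017436426606490268734904399292085244135282580563237377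

/-- The possible rows: each entry lists seven distinct columns from `1, …, 84`, one in each byte, in
increasing order. -/
def rowTable : List ℕ := [
  22314868011106817, 19156842748052225, 22594135106257665, 21728751104951553, 21448345357059585,
  11013928369194497, 10445476596352769, 22887756351538177, 6205691040171009, 20061813933343489,
  20901845363723521, 23161281411091457, 21455011599945729, 20339015736758529, 12986465484214785,
  20061921828147969, 18344398397180161, 19771680470993409, 22857915288786689, 21468128162087425,
  21748447725224449, 18917291266937601, 12697276477080833, 17780383476947969, 18335589553867009,
  22583118969897729, 16943612077674241, 18076147691816961, 19491223569434625, 19771564674717185,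
  18926126166577921, 16953529308749569, 16953572275264257, 18639084945873921, 23423077234249985,
  16671036474394625, 13554947052996353, 20892014403390977, 16104740809740289, 21734236047347713,
  18064053063651073, 17791391629451521, 23701270720546049, 20322471675174657, 22575375278605825,
  17236159833770753, 23440703966160385, 20330194194535681, 20608379107415809, 22882182124021761,
  22581993957959425, 22300484217147649, 22033354666021121, 16953610929969665, 19207627283636993,
  19490205847986689, 23713434271024385, 18929463490381825, 20620378758775553, 18366513335304961,
  18648967614960129, 20898684553925377, 21745317097182209, 18929411916697089, 22322582562341633,
  20906381118215681, 20038797657050113, 23160332743738881, 23444088601840897, 19771517245262849,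
  23726585124555521, 23163622555716097, 16953529308547329, 19496802361934849, 22883329182861057,
  23734389985773057, 21749633506149633, 22040016681959937, 22320379078377985, 11859461417731329,
  9884734558701057, 23443942135435777, 23728866223592705, 23721131053094401, 23425332361239809,
  14974404016083457, 23164760940881409, 22883350638759425, 22887658173170945, 22587495675794177,
  23161428012572673, 22600715787511553, 22873368901660673, 22879948302453249, 20607262163668225,
  22576496382511873, 21192215538181121, 21192250066605569, 20618278990581761, 22027865696698881,
  21757420650434817, 22322564979823617, 22322569476118529, 23436353298508545, 20887568808874497,
  23440768053154049, 23735338401795329, 19490124141955585, 23721079161554433, 22814905048826881,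
  18904019632654081, 18080579744695042, 14678626394244098, 14952366218872066, 23162513965647106,
  21458206870603778, 16380679051479298, 20905302543763970, 19490072433593090, 22019000633265154,
  20337907416894978, 18646850245496578, 18923913955052290, 23163630909526018, 16091533414765058,
  18352163681144066, 21747494645273602, 21755242397107970, 21163572098242050, 12131010927068930,
  17210758959206402, 16087118272595202, 22580855437529602, 18073991652184066, 17800174619006978,
  22039839915772418, 22320245496482562, 22311432206555394, 20614928764438530, 23721130886111490,
  22882151907467778, 18080610348376066, 22601810768562178, 21461604594161666, 18620393248203266,
  20610517900662786, 23451776257040642, 22027805636762882, 20033287248089090, 23445084748456194,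
  23442864115753218, 17503318977020674, 22590798606440962, 14962308984210434, 14407098780746498,
  20601751872996354, 21166913565559042, 23146039094093570, 23712326355256322, 15540712667025154,
  20908571754956034, 16387336856079874, 22583119389854466, 23733259941187842, 23146021914480898,
  17235090301260290, 22322552363680514, 21748615918459906, 20337938085645826, 23715642237715202,
  20337881579916290, 23435189160182530, 18083930643440130, 23723351653290242, 19210908200469762,
  22031202669497602, 21187886160023554, 20908619181328898, 21755225031969026, 23162609227798018,
  22882237940834050, 23163674448238082, 22601793134004482, 21469361321549314, 22596248532551682,
  21704441355372290, 23170245411865858, 23442980230337538, 21741971301010690, 22605126449564418,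
  22036700814117378, 20613868093114370, 23697946551976706, 23723342860062210, 23713395650465282,
  20614946079969794, 23169163196500226, 23170271214899458, 23714490951206402, 14975559612630274,
  20605059031238146, 22876645591161858, 21175696993028354, 20610530482982914, 18641365656801282,
  23435262158117634, 16091460450652674, 14970031588050690, 20902914709785090, 18082723438659074,
  17229545095629058, 17792516860742402, 20060684407475202, 19204238116329986, 19758357582777602,
  15815534672482050, 18911789127697411, 15805621517878787, 19747379427673859, 17188708378149891,
  22314769395156995, 23447283350374659, 20344410131466755, 16089282968947459, 15531765914209283,
  20897575981745155, 21469304864967171, 19205264411462659, 21173476141369603, 18911759382680067,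
  22884389450289923, 23405459194450947, 20029949756115715, 23160405859309059, 21730907330844675,
  22875572167973123, 20323493523556867, 23706806917925891, 22885390144508419, 22605001794591235,
  21459418203752451, 22600749827494659, 13554925813893891, 20610500637102339, 21996989111339523,
  16387289443928579, 22878870770554883, 23726649835398403, 21183363459190531, 13555999522031107,
  20600630919370243, 22596360539282179, 19496755689948163, 16667673060902403, 20875500119394307,
  21726547905154563, 23444054057364739, 22298315679471875, 23725520528421635, 20901961782857219,
  16387328164038659, 15815573562266115, 23160371534958851, 21459409781854211, 22885502301638659,
  22605131148369667, 20060865552123139, 17503323927809795, 23717836913706243, 23155981960418051,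
  23731056891993347, 22032306929996291, 22884432736955139, 23447400205260291, 23726680471840771,
  19767265126516995, 23445205495718147, 23430846561322499, 18618176825592579, 21469357095388931,
  21726539281008643, 23169167441923587, 23170275543489283, 18895232348456451, 18930567634289667,
  23140515445607683, 23446240194664195, 23730918813666051, 16948083087969795, 20627070956145923,
  14407081768981507, 21467080559104515, 22857936746450179, 23169163112878851, 22596352317654275,
  18363163562280195, 23138307883536643, 22853521386115075, 21192301437652739, 19479163268043779,
  21162468140320259, 19766144476716035, 21192301537661187, 18641365657193219, 23446136610752771,
  21721028737502211, 21752884544146179, 18926061472450819, 15526350179405571, 15823265847903747,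
  11295394907490051, 21432909211108612, 15509805729383940, 22542264937613060, 23735295217109252,
  22869004642093828, 22257482819438852, 10735717702240260, 17513253488889348, 16952378038357764,
  11566948442179076, 13261317504045060, 15255926136574468, 21438428496794372, 16942572712301572,
  12135417563582468, 23154895047300868, 23681419399927812, 10731358461956100, 16363061331363844,
  23152691779672836, 23452729588259844, 20304810567407364, 22314782382169604, 20590709309837828,
  12996404207486980, 20602847140126980, 22321486910399236, 21189973447548164, 20314757913912580,
  19207549703688452, 22033410619549444, 19188853695127812, 18345536900309252, 13276766669838596,
  20884313527035140, 22855754920631044, 23136121997895428, 15253710152406276, 18925031252963332,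
  18364284634666756, 16388457691814404, 23430838544117508, 16667725274285572, 23729918625389572,
  22598534062215684, 18080576140222724, 21751935912251140, 23733238719057412, 23452863236479748,
  21474846147806468, 19778299689111300, 21750827894650116, 20624914816837380, 20908601886119684,
  20344564616203268, 21472668700261124, 12972124302739460, 21130466187216132, 21473737961380612,
  19446035915671300, 21185660913060356, 22040016515053316, 22320396475509252, 20048714653373188,
  22603906611616772, 22320396460301828, 16363070005451012, 23170352701900036, 23161501313413636,
  23429742906251268, 20897434348884740, 23449616326134020, 22604091917673220, 22320409376656388,
  22039956301227780, 15257034103325956, 22882164976914948, 22600612371566084, 23729940032331524,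
  23170288731167492, 23733195601086724, 23169223326701060, 13844075896899076, 20625984297312516,
  10165092726542340, 21185674404308996, 23449487106838532, 22320405081821956, 20894243187986180,
  20874391815721220, 13824267423583748, 14394918303894788, 19778213436001284, 12714929230775812,
  22035437405800197, 23169033810020357, 18348843922819589, 23717819011894021, 21183440431877125,
  19491287993486597, 9885786624100101, 18931645282520837, 11860522442753797, 23450513216376325,
  15538496531271941, 20338951178029829, 21464821037273861, 17225112908076293, 19762841781016325,
  18905145150018309, 22275143960497669, 23446119566153989, 22026736105228293, 19213051473432325,
  23712313200219397, 19770512491612165, 20324657678325765, 20872193011157253, 20035490533282565,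
  21754040109238789, 21752979285874693, 16100338399382021, 22294982497535493, 18080610499958533,
  20906329630123525, 14399355139459589, 23450590896396549, 21733166702464773, 20894252266432261,
  16386224325855749, 18927251784077573, 20907467946661893, 20334626701905157, 22031177287014149,
  17515448485809157, 19205402271092485, 20339033355260933, 21723189123354373, 22032233798503173,
  23445162057011205, 22596360958906373, 22031207318095365, 20059688226786309, 22318197435471877,
  21191137602504453, 23441888972180229, 20059731243962373, 21754078696183301, 19486885870112773,
  20059774682599429, 22038873665964037, 22319201752128005, 18366504980190981, 23170189493077765,
  23439651715948293, 22321418325266949, 22318119638535685, 23729918421700869, 22296103636634117,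
  23729987595339269, 21752987976274437, 17226242551977733, 23162549048315397, 22860148823689477,
  21474776871734277, 22589690537773061, 18358774106753541, 23735480857791237, 22319214569327621,
  22035553655918853, 18646884655895301, 16951360299275013, 19756201627359493, 20058562827651845,
  16663271173851909, 19486851326741765, 19175599190181381, 15531873557285893, 11013894076630790,
  18082761907570950, 23142684253030918, 21451631343176454, 22588582234491910, 9889123864284422,
  19469211878493702, 23424223704713222, 14957894010474502, 15529635778793734, 20900814605849094,
  18337766933990662, 19766041245979142, 14112352456020230, 20342215437588230, 16922686878779142,
  18640158502357254, 22839176144357382, 10171715717370118, 23730953358675974, 11013911306831622,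
  11584622568146694, 20028859001735942, 19490149962550534, 12431237898439430, 21182276831480326,
  20612733868050694, 17236185721276166, 22887684060220166, 18075095491742726, 17236189510766342,
  23163683019426310, 20343405210111750, 21756316759954438, 20339028941346054, 22600737042796294,
  22881130126121478, 19494608238744326, 19778286718360326, 22881143042804486, 22030034792030214,
  20621590595904006, 22036704876242182, 23441889578591750, 22599676237194502, 23729961742248710,
  21460457501363462, 20342262884278278, 16659993861097990, 22322578218429190, 22322582530895878,
  22032259667134726, 20901978961812998, 19485756093045254, 23452884729074950, 21746412011590918,
  23728836157774086, 23452910481510150, 23449564651784710, 22036726704900358, 21743100658913286,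
  23731056959102214, 19769438834658822, 22871195411222022, 22298324269599238, 22600750247910662,
  21756307666966278, 22887748569664518, 21747524744188934, 23163674094276358, 23434149659611654,
  22878883403142406, 23160371585488646, 20044277968998406, 18645755265812742, 21470396224776198,
  20321350587583494, 16656678281152774, 18057400125819910, 14100223316985863, 18364275555895559,
  23681397739883015, 23415384746167047, 13551610115656711, 20876586661514503, 23448434570038791,
  13560406192164615, 20582982562614791, 23682501663918087, 22590806977942279, 22296112108737543,
  23165791497033479, 16085993075054599, 14673094762828551, 22578682419878663, 18634704062059271,
  19205359220427783, 20060766398844679, 19752898629012231, 22321401078358535, 20898628753957895,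
  21184501776983559, 17801308776765447, 17508821419565063, 22585309790416135, 21463812191164679,
  17236177013510407, 20896459930153223, 22886588861260295, 22309353863721735, 17514353521597703,
  17792503975515143, 20060865503237639, 21182345821562375, 18643556225591815, 19214172577664775,
  21472664388440327, 23436361938775047, 23170314552609031, 18928338360738823, 20341241035695623,
  20624936560107527, 23716655243856903, 20907485127187463, 19761720812249863, 20336812486366727,
  20624936560964871, 23162622332118279, 21751797950844679, 21186743733133831, 20307013733976583,
  22321504410011911, 20624936560889863, 20025513037596935, 22039964891094535, 22886627667483911,
  22320409294286343, 23734402888637447, 23159241638155527, 22319270841160199, 22885545301643271,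
  23448494581418503, 23450642554097159, 22320405015636743, 22885562666651143, 16940356677672711,
  18364267083862023, 23160388765163271, 21191189411728135, 23441799098278919, 21183415049063431,
  23450720297947911, 21439549466546439, 13276753750854919, 20054259741497607, 17799126798178311,
  18912889093888775, 22589673290467592, 23143835824753160, 23151532188109576, 22306012075003144,
  22301618323525128, 16102481353445128, 15258039243312648, 22038847912940040, 20622677221643016,
  19491283648448776, 22881082611275272, 21188899839678216, 15798977405324040, 23438543714130440,
  21756294866148104, 23430838492667144, 18079484948777480, 22011300026453768, 18352125110127880,
  20906308104889096, 18929407622451720, 22597455789696520, 23728861861126920, 22597469010405896,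
  20906325318508552, 22034493035260168, 16103667134174728, 21756303792676104, 21184557746300168,
  16100364254513928, 19214202794152456, 23165894844551432, 19206501546920968, 20052030603072264,
  22037821837293320, 23449573208100616, 22593045076647176, 23716599325330184, 19209822027521544,
  20615002132913160, 18081653940750856, 23451776694818056, 19492405105664520, 17783613140306184,
  20627096744041224, 21750758804688904, 22315959572898312, 20905247062232072, 23721048928356872,
  22319296965450504, 23734402870807048, 23157089674332424, 23733294770101256, 23451694736411656,
  23442997797724680, 22288316540981000, 22885502149726216, 20900840459079688, 23728844697180424,
  23441855185301768, 23168093933931272, 23734290715185416, 22309310761474312, 23733229843060232,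
  23157047212381448, 20892053242973704, 18629150484139528, 22038869421329416, 21729755960118024,
  20905294727617032, 18076152088103688, 19194342393974025, 21172376797712137, 19760642489257993,
  22318054995333385, 20610565011084297, 22037658105876233, 22597313786156809, 20055350411598089,
  22036558409435657, 23146021880273417, 19767244005579529, 17793556141575433, 19471415113225993,
  20342353044576009, 20342340176518409, 16101442240647177, 20901948695845897, 23693552766684937,
  18064053249251081, 23713395633430793, 22321448322796809, 17507734808235785, 15819949764578057,
  16657795090552841, 21452799642507529, 22034484529404425, 17794720363912201, 20048719218094089,
  18349917632073993, 15821088368560905, 18076199483805449, 23433050182390281, 21472659991042057,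
  19778170132565001, 22880043515715849, 20621530079565065, 20059748205136905, 12420195386789385,
  20042091847030281, 23733286129110537, 22593045143816969, 22034501237475849, 23438578140122121,
  23413151413440009, 23723256811229193, 22037722800198665, 18362016403427849, 23446283212036361,
  20627109611248393, 23727770955882761, 22601772062739977, 21172411376606985, 23718944815391753,
  21173506559317769, 20909641049710857, 22596356630648585, 21450583590898441, 23449516884625929,
  22027866018884105, 22032285454505225, 22878913720361225, 20053143100659977, 22882156235854857,
  23718875876298505, 18065143951723786, 19771650708409866, 14124468542115594, 21159122478108682,
  18634712568107274, 16100364069507850, 19200926713189642, 21747395542257162, 17782543795165194,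
  20054186458749194, 18643500155279882, 23451763304240138, 17504423170805514, 21748611253409034,
  20616041279725322, 21460526355320586, 21187830325777162, 17796932120549642, 23143809854545674,
  19495699211753994, 19196550276648458, 15252623424688138, 18075074185666058, 23734307963605770,
  15811145165311242, 23711222548409098, 17793599209213450, 20618278923867402, 23718949110227978,
  17773752046653450, 15812223302765834, 19213129068056842, 19494608475004682, 20061965029805322,
  23164700440071434, 20058670505401098, 22887718420617738, 23725559401092106, 19762764169220618,
  21754147667643402, 23451716025912074, 18362089837104906, 23446253146543626, 23725567838918410,
  21755247447313162, 17494493155692042, 22301609919388682, 22320327268966410, 22871199774546442,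
  22882177828657930, 22600763233209866, 22879961658627082, 22875623893765130, 23448413229879562,
  23441841879521546, 22021268628706058, 21744144235171338, 20611664808121610, 19479167882763274,
  23165881758457098, 18923866844892427, 23730948979035659, 15531865018142475, 19210878101688331,
  23448460356424203, 22882130280518155, 17785902610781195, 18364305755543307, 22881086670966539,
  17800209112897547, 20623806664416011, 18363146248656907, 20907471956413451, 21453899339210251,
  23442924396815115, 23141576403586571, 21450596509360651, 17796915092202251, 22025641091083275,
  15530774011710731, 18076178058580747, 16098139242894091, 23147164493555467, 18075044053584907,
  17793629189050123, 22600741624750347, 19772771980548363, 18923888420392203, 19779403425844491,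
  20622703092112139, 19489007282360075, 22032285370552843, 20619378552477451, 20338990000772363,
  20627130951668491, 18069576358169611, 20905307730219019, 23735338401664267, 21739772345192459,
  20616105736933899, 21755195219709707, 23168115460347147, 23709014665731851, 22601806726113547,
  21463794943856651, 21734210043056139, 21190089680556811, 22309357737611787, 21469344159440907,
  22037821549843723, 22873360193231115, 23159246000755723, 23433028943089675, 17793573203479820,
  23715603128520460, 22317058613186572, 22587534649332492, 17228437313426444, 17518772723520524,
  23712313519511308, 22605010333864204, 19771667804985612, 17514301747108364, 15806747152947212,
  17228437397707276, 17235073138560524, 23161423700436492, 19759517443168012, 21458292990090764,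
  17785889725879308, 23447374167742476, 23143831514191628, 18360981770014220, 22025649529429516,
  22872282256578828, 22863438683903756, 23166998702200588, 17800222115238412, 22038873649516044,
  23452879844347660, 23166972629883916, 14691859643175180, 23433024530029580, 21757455128797452,
  21724331719462412, 22586387608181004, 22036644696104972, 22604035628670988, 21182324160929548,
  23727723710779916, 23452794281267980, 22887653844460044, 23157098820407308, 23451780804646156,
  22317059085248012, 23716659690543372, 22317097806729996, 21174623402659340, 21757416105257228,
  21756316626393100, 23712330649704972, 19766140198525708, 12432345984078092, 22848036965191437,
  16375199094083853, 22308228413264909, 22585283768030477, 22865646398608909, 22027822798739213,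
  22026749208959245, 14683033350377485, 18643530337950733, 22037744292011789, 18356518980162829,
  19202043522653197, 20059735741044493, 20330202750262029, 22587487254024461, 23725537775261709,
  22884394099549965, 17233969265711885, 17509946700468237, 23445162293071373, 21467110776447501,
  20055355060135181, 19777156958002957, 20341210717754893, 21186735176357645, 21459418422846477,
  21753031145102349, 23164834072564237, 22598538204879117, 21471569188302605, 23735480875621901,
  19208713741214221, 22037692533116429, 23447395727193101, 22605178409788429, 23735433261882893,
  22886571495659021, 23166998702201613, 21737555890278925, 21470430853602573, 22026744762408205,
  18355432437587725, 23734346618114061, 23167024639053325, 22886665883423245, 22317067573137421,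
  20901927221205005, 21474833144354317, 18631409754641677, 19206514717892877, 23440699384008974,
  16374073711400206, 14113464785309710, 14965616412267278, 19209830533700366, 19490128487980558,
  21735348344463118, 20056415748362766, 23723278285541390, 19198787988166414, 19490184423678478,
  22299419334155022, 16378527844472078, 18927213027594510, 21470426424223758, 20342349019160078,
  20054233938399502, 21744209097664014, 22310440287016462, 22875623825675022, 23168111166755854,
  18928355405734414, 20344535040074254, 18076178092199694, 18926104690954254, 23445179355238670,
  23724468176162574, 22321487329961486, 18929459447669262, 23166972864830222, 21750758771205390,
  17504423204164110, 21185605330997518, 18901868022796302, 22022273566709262, 21737555889361167,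
  22603988367184655, 23451780517533455, 23161475138657295, 13558232989308175, 23446209962318351,
  23162579030123279, 23723278453842191, 23722213402809103, 16386194142925839, 22866801812181263,
  22873411850806031, 23162609277734927, 22600763098206991, 22886588810734607, 19772763289030671,
  13278961347203087, 21191189361332239, 18931602300412687, 22604061768750351, 16661085085766671,
  21451691641675023, 23449538561578767, 23450719964440335, 21756355431766287, 23734307745111055,
  23450603613001999, 20886503774883855, 22884432870380047, 22886584312860943, 21449462537395471,
  22310362877204239, 14124490151499023, 16941477798220048, 18920607233808656, 16658885810655504,
  22302696344198928, 21450574782338832, 17224022036386576, 18916217676370704, 22576474789647632,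
  23166998702200848, 22306050999853584, 19212029489518608, 18079489428493072, 23450620978275856,
  22593049422473232, 21191185015574800, 22033367853964048, 22597425605973008, 23165912244758544,
  22596347839257104, 22887688238405136, 23727771191026960, 22885502149991952, 22887744038378000,
  17516496441841936, 23448490573304337, 22036726199489297, 22307060014323217, 22580846797329425,
  19756171512388113, 23160375795916817, 23434158469621009, 23437418147026961, 22036670633681425,
  23733199912703761, 23708954586453777, 23723347375304465, 22602927746265361, 18649006353027601,
  22878887967790353, 22588603827951377, 19777152696131089, 20619391403955985, 22876719075892497,
  22601858434016273, 22036610252152849, 20624889046245393, 22886537153024785, 23169241010874641,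
  20042113339104529, 22605178425644305, 22861226842592273, 23164717889098513, 22307115982657297,
  22038804997018898, 19492374772717074, 19193256053380882, 20331254900070674, 22866801710668818,
  20046489927949586, 21749689526329618, 16662180167881746, 18075104452089618, 20905243070175250,
  19777148368264210, 22025653942097170, 22317054604944914, 22033384967580946, 18645703523505426,
  19214202827844114, 20894260754783506, 21469357229413650, 22886528378084626, 23162622129543186,
  23732121706763282, 22598469350397458, 20898624323982355, 23729909748143635, 14127767177991443,
  21751901299678739, 23722196071882515, 18918399469753363, 21465989554379283, 22036687813481491,
  19199887533415955, 23433050334309395, 23452863186541075, 22875576430174227, 22882238227551251,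
  21464937237126163, 21748615867670035, 22602953632783379, 21474871966770963, 23155951945127443,
  23733260058039827, 18634742666302739, 20609452833315859, 20046524387825172, 21177939049453844,
  22033384883362324, 21473737827162900, 20057510965616148, 20622698696876564, 22597460252238612,
  22595205226833428, 23440759783366676, 20333518414947604, 20613868059171860, 23451802396074772,
  22032289700321812, 22032294062466324, 22602958029008148, 21757420635894292, 23159315175060756,
  22322608199311892, 23168106972525076, 23440768322905108, 23731056639023380, 23735476563353620,
  23446278866343700, 21749698081791764, 23732190963768084, 20342348969090836, 22595222473742356,
  18645781068652052, 18922823520884244, 22604069988800021, 22883324517095957, 21457219332415253,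
  20625958509945109, 16671027968743445, 23168111081890837, 23163665774356245, 23713434507161109,
  21746420988518933, 22881142875692053, 23724468328798229, 18076199500846613, 22317067675315221,
  21757454994905877, 19779403326037013, 22038865395129109, 22317054453291541, 22605161211762709,
  23724450996623893, 23152679331242261, 23726624401070613, 18649027828717077, 16669902670994197,
  20050943841933590, 19202094978374166, 20906376907659286, 19763932619217430, 21462738466448918,
  20609452816800022, 22300514669439766, 23716724384540950, 21463812123664918, 21464946180237078,
  18931619682132758, 22597369922985238, 23161419304605974, 23157042867477526, 23713425950713366,
  23726594068063766, 20627045001992470, 21458288695057686, 20903099848466198, 22886610368996886,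
  22310453391533078, 21181263556320534, 19206484653841174, 23451767750597399, 22598503878892567,
  22872273633744919, 21756342446659607, 23722208872372247, 22597443090066455, 23150475996634647,
  23152666262448663, 21185618534995991, 23445179608279319, 23445183649290775, 23733294720358423,
  23452854276528919, 21190024902810135, 20329072938523159, 22590798606113303, 22878939439504920,
  21468197167703064, 22601858298551064, 23728866340643352, 23449534536690456, 22315972272725528,
  23154895620027160, 20623789619747608, 23725567806742296, 22322608232997656, 23729953102309656,
  21188977383972120, 23167002929535256, 23450685654048536, 23450715669605144, 23728840688737304,
  23452884476107289, 21461604459879449, 23155951979012377, 18358761138101785, 20898641689256729,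
  17801347481607193, 23720052950640409, 22881108499705369, 23167024657606681, 23731035131617561,
  20621573348729625, 20049831445797657, 21754126260576026, 21186769738998554, 22311565653384218,
  20054208152476698, 22037817424157466, 23720053102162714, 22319292519032090, 23162592098983450,
  23164816959744794, 22883342051187738, 23731056657112346, 23447399937878810, 20895373320199451,
  21190046730953755, 21473737776177435, 22034484428548635, 20616105670155803, 22875542053922075,
  23426423148846363, 18930537282674204, 20048736431514396, 20057519521209884, 22591915432157212,
  22593014977666844, 23721156841317405, 22874520138098973, 23731056640074013, 21466002624884254,
  22595192409104926, 22311509768677151, 22877831574397215, 23438548060547103, 21468244714596384,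
  23444088635205664, 21756355315507488, 21738694460714272, 22025679830002976, 22591945631736096,
  23159306265043745, 23725559334119969, 23168106939098145, 20621616180699938, 21745300119429922,
  23165912025278242, 22022372755648547, 22318188711191587, 22599633623722020, 22594127190042148,
  23444071153150244, 22878913872668708, 21756299481196325, 22884389838203942, 23166998871025702,
  23170314484263207, 23449560339984168]

/-! ### The search for exact covers -/

/-- Evaluates `n` to a numeral before passing it to `k`. -/
def force {α : Type} (n : ℕ) (k : ℕ → α) : α :=
  Nat.rec (k 0) (fun m _ => k m) (Nat.succ n)

/-- The identity; its unfolding keeps the recursion depth of the kernel bounded. -/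
def tick {α : Type} (x : α) : α := x

/-- The `i`-th byte of `p`. -/
def byte (p i : ℕ) : ℕ := Nat.land (Nat.shiftRight p (Nat.mul 8 i)) 255

/-- The seven columns of the row `p`. -/
def cols (p : ℕ) : List ℕ :=
  force (byte p 0) fun a => force (byte p 1) fun b => force (byte p 2) fun c =>
  force (byte p 3) fun d => force (byte p 4) fun e => force (byte p 5) fun f =>
  force (byte p 6) fun g => [a, b, c, d, e, f, g]

/-- The number whose only nonzero field is a `1` in field `t`. -/
def unit (t : ℕ) : ℕ := Nat.shiftLeft 1 (Nat.mul 363 t)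

/-- A row as a number: lowest bit set in the fields of its columns. -/
def spread (p : ℕ) : ℕ :=
  List.rec 0 (fun t _ ih => Nat.lor (unit t) ih) (cols p)

/-- The field `t` of `X`. -/
def fld (X t : ℕ) : ℕ :=
  Nat.land (Nat.shiftRight X (Nat.mul 363 t)) (Nat.sub (Nat.pow 2 363) 1)

/-- Passes to `k` the members of `rows` (in reverse order) that are disjoint from `D`. -/
def disj (D : ℕ) (rows : List ℕ) (k : List ℕ → Bool) : Bool :=
  (List.rec (fun acc => k acc) (fun p _ ih acc =>
    Bool.rec (tick (ih acc)) (tick (ih (p :: acc))) (Nat.beq (Nat.land (spread p) D) 0)) rows :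
    List ℕ → Bool) []

/-- A `1` in each of the fields `1, …, 84`. -/
def ones : ℕ := Nat.rec 0 (fun n ih => Nat.add ih (unit (Nat.succ n))) 84

/-- The top bits of the fields `1, …, 84`. -/
def flags : ℕ := Nat.shiftLeft ones 362

/-- The top bits of the fields `0, …, 84`. -/
def bias : ℕ := Nat.shiftLeft (Nat.succ ones) 362

/-- All bits of a field but the top one. -/
def full : ℕ := Nat.sub (Nat.pow 2 362) 1

/-- The top bits of those fields `1, …, 84` in which `Y` vanishes. -/
def zeros (Y : ℕ) : ℕ := Nat.land (Nat.sub bias Y) flags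

/-- The field of the lowest bit of `Z`, a nonempty set of top bits. -/
def colOf (Z : ℕ) : ℕ := byte colTable (Nat.mod (Nat.gcd Z (Nat.pow 2 30855)) 101)

/-- Removes the lowest bit of each field selected by `U` until some field becomes `0`, and
returns such a field; `z` is applied after `n` unsuccessful rounds. -/
def descend (U : ℕ) (z : ℕ → ℕ) (n : ℕ) : ℕ → ℕ :=
  Nat.rec z (fun _ ih Y =>
    (fun Y' => Bool.rec (colOf (zeros Y')) (ih Y') (Nat.beq (zeros Y') 0))
      (Nat.land Y (Nat.sub Y U))) n

/-- A column of `X` with few candidate rows. As a covered column carries five flags, four rounds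
can be made on all columns before the uncovered ones are singled out. -/
def pick (X : ℕ) : ℕ :=
  descend ones (fun _ =>
    descend (Nat.xor ones (Nat.land ones (Nat.shiftRight X 361))) (fun _ => 1) 357 X) 4 X

/-- The bit `b` together with its residue modulo `373`, which identifies it: the powers
`2 ^ i` with `i < 372` are distinct modulo `373`. -/
def label (b : ℕ) : ℕ := Nat.lor (Nat.shiftLeft b 64) (Nat.mod b 373)

/-- The rows compatible with the row labelled `u`, in each of the fields `1, …, 84`. -/
def mask (CT u : ℕ) : ℕ := Nat.mul ones (fld CT (Nat.land u 1023))

/-- The flags of the columns of the row labelled `u`. -/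
def cover (X₀ u : ℕ) : ℕ :=
  (fun b => Nat.mul (Nat.land X₀ (Nat.mul ones b)) (Nat.div (Nat.mul 31 (Nat.pow 2 357)) b))
    (Nat.shiftRight u 64)

/-- Chooses the row labelled `u` in the state `X`: either some column has no candidate left, or
the search `ih` goes on. -/
def attempt (CT X₀ X : ℕ) (ih : ℕ → Bool) (u : ℕ) : Bool :=
  (fun X' =>
    Bool.rec (Nat.beq (fld X' (colOf (zeros X'))) 0) (ih (Nat.lor X' (cover X₀ u)))
      (Nat.beq (zeros X') 0)) (Nat.land X (mask CT u))

/-- Whether `test` succeeds on (the label of) each bit of a number; `n` is the fuel. -/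
def loop (test : ℕ → Bool) (n : ℕ) : ℕ → Bool :=
  Nat.rec (fun _ => false) (fun _ ih f =>
    Bool.rec
      (force (label (Nat.gcd f (Nat.pow 2 363))) fun u =>
        Bool.rec false (ih (Nat.xor f (Nat.shiftRight u 64))) (test u))
      true (Nat.beq f 0)) n

/-- Refutes the state `X` by branching over the candidate rows of a column; `n` is the fuel. -/
def search (CT X₀ : ℕ) (n : ℕ) : ℕ → Bool :=
  Nat.rec (fun _ => false) (fun _ ih X =>
    (fun f => Bool.rec (loop (attempt CT X₀ X ih) 358 f) false (Nat.ble (Nat.pow 2 357) f))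
      (fld X (pick X))) n

/-- The incidence matrix of `rows`: bit `i` of field `t` says that row `i` contains column `t`. -/
def initX (rows : List ℕ) : ℕ :=
  List.rec 0 (fun p _ ih => Nat.lor (spread p) (Nat.shiftLeft ih 1)) rows

/-- The rows that meet the row `p`. -/
def conf (X p : ℕ) : ℕ :=
  List.rec 0 (fun t _ ih => Nat.lor (fld X t) ih) (cols p)

/-- The compatibility table: field `2 ^ i % 373` holds the rows compatible with row `i`, row `i`
itself and the flags. -/
def keeps (X : ℕ) (rows : List ℕ) : ℕ → ℕ :=
  List.rec (fun _ => 0) (fun p _ ih b => Nat.lor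
    (Nat.shiftLeft (Nat.lor (Nat.xor full (conf X p)) b) (Nat.mul 363 (Nat.mod b 373)))
    (force (Nat.mul 2 b) ih)) rows

/-- Whether it is verified that no set of `rows` partitions the columns outside `cov`. -/
def engine (cov : ℕ) (rows : List ℕ) : Bool :=
  Bool.rec false
    (force (initX rows) fun X => force (keeps X rows 1) fun CT =>
      force (Nat.lor X (Nat.shiftLeft (Nat.lor cov (Nat.mul 30 cov)) 357)) (search CT X 12))
    (Nat.ble rows.length 357)

/-- Whether it is verified that no exact cover contains the row `d` and a row `p` through column
`c` with `p % q = i`. -/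
def part (d c q i : ℕ) : Bool :=
  disj (spread d) rowTable fun rows =>
    (List.rec true (fun p _ ih =>
      Bool.rec (tick ih)
        (Bool.rec false (tick ih)
          (disj (spread p) rows fun rows' => engine (Nat.lor (spread d) (spread p)) rows'))
        (Bool.rec false (Nat.beq (Nat.land (spread p) (unit c)) (unit c))
          (Nat.beq (Nat.mod p q) i))) rows : Bool)

end

end Search

/-! ### Soundness of the search -/

namespace Search
set_option exponentiation.threshold 1000

theorem force_eq {α : Type} (n : ℕ) (k : ℕ → α) : force n k = k n := rfl

theorem cols_eq (p : ℕ) : cols p =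
    [byte p 0, byte p 1, byte p 2, byte p 3, byte p 4, byte p 5, byte p 6] := rfl

theorem testBit_fld (X t j : ℕ) (hj : j < 363) : (fld X t).testBit j = X.testBit (363 * t + j) := by
  have : fld X t = (X >>> (363 * t)) % 2 ^ 363 := Nat.and_two_pow_sub_one_eq_mod _ _
  rw [this, Nat.testBit_mod_two_pow, Nat.testBit_shiftRight]
  simp [hj]

theorem fld_lt (X t : ℕ) : fld X t < 2 ^ 363 := by
  have : fld X t = (X >>> (363 * t)) % 2 ^ 363 := Nat.and_two_pow_sub_one_eq_mod _ _
  rw [this]; exact Nat.mod_lt _ (by positivity)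

theorem testBit_unit (t p : ℕ) : (unit t).testBit p = decide (363 * t = p) := by
  have : unit t = 2 ^ (363 * t) := Nat.one_shiftLeft _
  rw [this, Nat.testBit_two_pow]

theorem testBit_spread (p n : ℕ) : (spread p).testBit n = true ↔ ∃ t ∈ cols p, n = 363 * t := by
  unfold spread
  induction cols p with
  | nil => simp
  | cons a l ih =>
    change (unit a ||| (List.rec 0 (fun t _ ih => Nat.lor (unit t) ih) l : ℕ)).testBit n = true ↔ _
    rw [Nat.testBit_or, Bool.or_eq_true, ih, testBit_unit]
    simp [eq_comm]

theorem testBit_ones_mul (v : ℕ) (hv : v < 2 ^ 363) (t j : ℕ) (ht : 1 ≤ t) (ht' : t ≤ 84)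
    (hj : j < 363) : (Nat.mul ones v).testBit (363 * t + j) = v.testBit j := by
  -- the partial sums of `ones`
  have key : ∀ n : ℕ, (Nat.rec 0 (fun n ih => Nat.add ih (unit (Nat.succ n))) n : ℕ) * v
      < 2 ^ (363 * (n + 1)) ∧ ∀ t, 1 ≤ t → t ≤ n →
      ((Nat.rec 0 (fun n ih => Nat.add ih (unit (Nat.succ n))) n : ℕ) * v).testBit (363 * t + j)
        = v.testBit j := by
    intro n
    induction n with
    | zero => exact ⟨by simp, fun t h h' => by omega⟩
    | succ n ih =>
      obtain ⟨h1, h2⟩ := ih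
      set s : ℕ := Nat.rec 0 (fun n ih => Nat.add ih (unit (Nat.succ n))) n with hs
      have hu : unit (n + 1) = 2 ^ (363 * (n + 1)) := Nat.one_shiftLeft _
      have e : (Nat.rec 0 (fun n ih => Nat.add ih (unit (Nat.succ n))) (n + 1) : ℕ) * v
          = 2 ^ (363 * (n + 1)) * v + s * v := by
        change (s + unit (n + 1)) * v = _
        rw [hu]; ring
      rw [e]
      refine ⟨?_, fun t h h' => ?_⟩
      · have : 363 * (n + 1 + 1) = 363 * (n + 1) + 363 := by ring
        rw [this, pow_add]
        calc _ < 2 ^ (363 * (n + 1)) * v + 2 ^ (363 * (n + 1)) := by omega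
          _ = 2 ^ (363 * (n + 1)) * (v + 1) := by ring
          _ ≤ _ := Nat.mul_le_mul_left _ hv
      · rw [Nat.testBit_two_pow_mul_add _ h1]
        split_ifs with h3
        · exact h2 t h (by omega)
        · have : t = n + 1 := by omega
          subst this
          rw [Nat.add_sub_cancel_left]
  have key' : ∀ n s : ℕ, s = Nat.rec 0 (fun n ih => Nat.add ih (unit (Nat.succ n))) n →
      t ≤ n → (Nat.mul s v).testBit (363 * t + j) = v.testBit j := by
    rintro n _ rfl h
    exact (key n).2 t ht h
  exact key' 84 ones rfl ht'

theorem colOf_mem (Z : ℕ) : 1 ≤ colOf Z ∧ colOf Z ≤ 84 := by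
  have h : ∀ i : Fin 101, 1 ≤ byte colTable i ∧ byte colTable i ≤ 84 := by decide +kernel
  exact h ⟨_, Nat.mod_lt (Nat.gcd Z (Nat.pow 2 30855)) (by norm_num)⟩

theorem descend_mem (U : ℕ) (z : ℕ → ℕ) (hz : ∀ Y, 1 ≤ z Y ∧ z Y ≤ 84) (n Y : ℕ) :
    1 ≤ descend U z n Y ∧ descend U z n Y ≤ 84 := by
  induction n generalizing Y with
  | zero => exact hz Y
  | succ n ih =>
    set Y' := Nat.land Y (Nat.sub Y U) with hY'
    have e : descend U z (n + 1) Y =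
      Bool.rec (colOf (zeros Y')) (descend U z n Y') (Nat.beq (zeros Y') 0) := rfl
    rw [e]
    cases Nat.beq (zeros Y') 0
    · exact colOf_mem _
    · exact ih _

theorem pick_mem (X : ℕ) : 1 ≤ pick X ∧ pick X ≤ 84 :=
  descend_mem _ _ (fun _ => descend_mem _ _ (fun _ => by decide) _ _) _ _

theorem label_shiftRight (b : ℕ) : Nat.shiftRight (label b) 64 = b := by
  change ((b <<< 64) ||| (b % 373)) >>> 64 = b
  have h : b % 373 < 2 ^ 64 := lt_trans (Nat.mod_lt _ (by norm_num)) (by norm_num)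
  rw [Nat.shiftRight_or_distrib, Nat.shiftLeft_shiftRight, Nat.shiftRight_eq_div_pow,
    Nat.div_eq_of_lt h, Nat.or_zero]

theorem label_land (b : ℕ) : Nat.land (label b) 1023 = b % 373 := by
  change ((b <<< 64) ||| (b % 373)) &&& (2 ^ 10 - 1) = b % 373
  have h : b % 373 < 2 ^ 10 := lt_trans (Nat.mod_lt _ (by norm_num)) (by norm_num)
  apply Nat.eq_of_testBit_eq
  intro i
  simp only [Nat.testBit_and, Nat.testBit_or, Nat.testBit_shiftLeft, Nat.testBit_two_pow_sub_one]
  by_cases hi : i < 10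
  · simp [hi]; omega
  · have : (b % 373).testBit i = false :=
      Nat.testBit_lt_two_pow (lt_of_lt_of_le h (Nat.pow_le_pow_right (by norm_num) (by omega)))
    simp [this, hi]

theorem loop_sound (f' : ℕ → Bool) (n f : ℕ) (hf : f < 2 ^ 363) (h : loop f' n f = true) (j : ℕ)
    (hj : f.testBit j = true) : f' (label (2 ^ j)) = true := by
  induction n generalizing f with
  | zero => exact absurd h (by simp [loop])
  | succ n ih =>
    have e : loop f' (n + 1) f = Bool.rec
      (Bool.rec false (loop f' n (Nat.xor f (Nat.shiftRight (label (Nat.gcd f (2 ^ 363))) 64)))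
        (f' (label (Nat.gcd f (2 ^ 363))))) true (Nat.beq f 0) := rfl
    rw [e] at h
    have hf0 : f ≠ 0 := by rintro rfl; simp at hj
    have hb : Nat.beq f 0 = false := by
      rw [← Bool.not_eq_true]; exact fun h => hf0 (Nat.eq_of_beq_eq_true h)
    rw [hb, label_shiftRight] at h
    obtain ⟨i, hi, hg⟩ := (Nat.dvd_prime_pow Nat.prime_two).1 (Nat.gcd_dvd_right f (2 ^ 363))
    rw [hg] at h
    -- the greatest common divisor is the lowest bit of `f`
    have hif : f.testBit i = true := by
      obtain ⟨m, hm⟩ : 2 ^ i ∣ f := hg ▸ Nat.gcd_dvd_left f (2 ^ 363)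
      have hm0 : 0 < m := Nat.pos_of_ne_zero (by rintro rfl; exact hf0 (by simpa using hm))
      have hi' : i < 363 := by
        by_contra hc
        have h3 : 2 ^ 363 ≤ 2 ^ i := Nat.pow_le_pow_right (by norm_num) (not_lt.1 hc)
        have h4 : 2 ^ i ≤ f := hm ▸ Nat.le_mul_of_pos_right _ hm0
        exact absurd (h3.trans h4) (not_le.2 hf)
      have hodd : m % 2 = 1 := by
        by_contra hc
        obtain ⟨c, rfl⟩ : 2 ∣ m := Nat.dvd_of_mod_eq_zero (by omega)
        have h3 : 2 ^ (i + 1) ∣ Nat.gcd f (2 ^ 363) :=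
          Nat.dvd_gcd ⟨c, by rw [hm]; ring⟩ (pow_dvd_pow 2 hi')
        rw [hg] at h3
        exact absurd (Nat.le_of_dvd (by positivity) h3)
          (not_le.2 (Nat.pow_lt_pow_right (by norm_num) (Nat.lt_succ_self i)))
      rw [hm, Nat.testBit_eq_decide_div_mod_eq, Nat.mul_div_cancel_left _ (by positivity)]
      simp [hodd]
    cases h1 : f' (label (2 ^ i)) with
    | false => rw [h1] at h; exact absurd h (by simp)
    | true =>
      rw [h1] at h
      by_cases hij : j = i
      · rw [hij]; exact h1
      · have hi' : i < 363 := by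
          by_contra hc
          rw [Nat.testBit_lt_two_pow (lt_of_lt_of_le hf
            (Nat.pow_le_pow_right (by norm_num) (not_lt.1 hc)))] at hif
          exact absurd hif (by simp)
        refine ih (f ^^^ 2 ^ i) (Nat.xor_lt_two_pow hf
          (Nat.pow_lt_pow_right (by norm_num) hi')) h ?_
        rw [Nat.testBit_xor, hj, Nat.testBit_two_pow]
        simp [Ne.symm hij]

theorem testBit_initX (rows : List ℕ) (n : ℕ) : (initX rows).testBit n = true ↔
    ∃ i, ∃ hi : i < rows.length, ∃ u ∈ cols rows[i], n = 363 * u + i := by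
  induction rows generalizing n with
  | nil => simp [initX]
  | cons p rows ih =>
    have e : initX (p :: rows) = spread p ||| (initX rows <<< 1) := rfl
    rw [e, Nat.testBit_or, Bool.or_eq_true, testBit_spread, Nat.testBit_shiftLeft,
      Bool.and_eq_true, ih]
    constructor
    · rintro (⟨t, ht, rfl⟩ | ⟨h1, i, hi, u, hu, h2⟩)
      · exact ⟨0, by simp, t, by simpa using ht, by simp⟩
      · exact ⟨i + 1, by simpa using hi, u, by simpa using hu, by
          simp only [ge_iff_le, decide_eq_true_eq] at h1; omega⟩
    · rintro ⟨i, hi, u, hu, rfl⟩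
      cases i with
      | zero => exact Or.inl ⟨u, by simpa using hu, by simp⟩
      | succ i =>
        exact Or.inr ⟨by simp; omega, i, by simpa using hi, u, by simpa using hu, by omega⟩

theorem testBit_conf (X p j : ℕ) (hj : j < 363) : (conf X p).testBit j = true ↔
    ∃ u ∈ cols p, X.testBit (363 * u + j) = true := by
  unfold conf
  induction cols p with
  | nil => simp
  | cons a l ih =>
    change (fld X a ||| (List.rec 0 (fun t _ ih => Nat.lor (fld X t) ih) l : ℕ)).testBit j = true
      ↔ _
    rw [Nat.testBit_or, Bool.or_eq_true, ih, testBit_fld _ _ _ hj]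
    simp

theorem testBit_full (j : ℕ) : full.testBit j = decide (j < 362) :=
  Nat.testBit_two_pow_sub_one _ _

theorem testBit_keeps (X : ℕ) (rows : List ℕ) (k i j : ℕ) (hi : i < rows.length)
    (h : ((full ^^^ conf X rows[i]) ||| 2 ^ (k + i)).testBit j = true) :
    (keeps X rows (2 ^ k)).testBit (363 * (2 ^ (k + i) % 373) + j) = true := by
  induction rows generalizing k i with
  | nil => simp at hi
  | cons p rows ih =>
    have e : keeps X (p :: rows) (2 ^ k) =
      (((full ^^^ conf X p) ||| 2 ^ k) <<< (363 * (2 ^ k % 373))) |||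
        keeps X rows (2 ^ (k + 1)) := by
      rw [pow_succ']; rfl
    rw [e, Nat.testBit_or, Bool.or_eq_true]
    cases i with
    | zero =>
      left
      rw [Nat.testBit_shiftLeft]
      simpa using h
    | succ i =>
      right
      have e2 : k + (i + 1) = k + 1 + i := by ring
      rw [e2] at h ⊢
      exact ih (k + 1) i (by simpa using hi) (by simpa using h)

/-- A partition of the columns `1, …, 84` by rows: `row t` is the part that contains `t`. -/
structure Sol (row : ℕ → ℕ) : Prop where
  mem : ∀ t, 1 ≤ t → t ≤ 84 → row t ∈ rowTable
  self : ∀ t, 1 ≤ t → t ≤ 84 → t ∈ cols (row t)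
  same : ∀ t, 1 ≤ t → t ≤ 84 → ∀ u ∈ cols (row t), row u = row t

/-- The states of the search that are compatible with a solution: each column is flagged as
covered, or still has its row in the solution among its candidates. -/
def Inv (row : ℕ → ℕ) (cov : ℕ) (rows : List ℕ) (X : ℕ) : Prop :=
  ∀ t, 1 ≤ t → t ≤ 84 → X.testBit (363 * t + 357) = true ∨
    (cov.testBit (363 * t) = false ∧ X.testBit (363 * t + rows.idxOf (row t)) = true)

theorem Inv.lor {row cov rows X} (h : Inv row cov rows X) (Y : ℕ) :
    Inv row cov rows (Nat.lor X Y) := by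
  intro t h1 h2
  change (X ||| Y).testBit _ = true ∨ (_ ∧ (X ||| Y).testBit _ = true)
  rw [Nat.testBit_or, Nat.testBit_or]
  rcases h t h1 h2 with h | ⟨h3, h⟩
  · left; simp [h]
  · right; simp [h3, h]

theorem Inv.fld_ne {row : ℕ → ℕ} {cov : ℕ} {rows : List ℕ} (hlen : rows.length ≤ 357)
    (hrow : ∀ t, 1 ≤ t → t ≤ 84 → cov.testBit (363 * t) = false → row t ∈ rows)
    {X : ℕ} (h : Inv row cov rows X) (t : ℕ) (h1 : 1 ≤ t) (h2 : t ≤ 84) : fld X t ≠ 0 := by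
  intro h0
  rcases h t h1 h2 with h | ⟨h3, h⟩
  · rw [← testBit_fld _ _ _ (by norm_num), h0] at h; simp at h
  · have := List.idxOf_lt_length_of_mem (hrow t h1 h2 h3)
    rw [← testBit_fld _ _ _ (by omega), h0] at h; simp at h

theorem Inv.mask {row : ℕ → ℕ} {cov : ℕ} {rows : List ℕ} (hs : Sol row) (hlen : rows.length ≤ 357)
    (hrow : ∀ t, 1 ≤ t → t ≤ 84 → cov.testBit (363 * t) = false → row t ∈ rows)
    {X : ℕ} (h : Inv row cov rows X) (t : ℕ) (h1 : 1 ≤ t) (h2 : t ≤ 84)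
    (h3 : cov.testBit (363 * t) = false) :
    Inv row cov rows (Nat.land X
      (mask (keeps (initX rows) rows 1) (label (2 ^ (rows.idxOf (row t)))))) := by
  have hi := List.idxOf_lt_length_of_mem (hrow t h1 h2 h3)
  have hget : rows[rows.idxOf (row t)] = row t := List.getElem_idxOf hi
  set i := rows.idxOf (row t) with hidef
  have hm : ∀ s j, 1 ≤ s → s ≤ 84 → j < 363 →
      ((full ^^^ conf (initX rows) (row t)) ||| 2 ^ i).testBit j = true →
      (Search.mask (keeps (initX rows) rows 1) (label (2 ^ i))).testBit (363 * s + j) = true := by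
    intro s j hs1 hs2 hj hb
    unfold Search.mask
    rw [label_land, testBit_ones_mul _ (fld_lt _ _) _ _ hs1 hs2 hj, testBit_fld _ _ _ hj]
    have := testBit_keeps (initX rows) rows 0 i j hi (by rw [hget]; simpa using hb)
    simpa using this
  intro s hs1 hs2
  change (X &&& _).testBit _ = true ∨ (_ ∧ (X &&& _).testBit _ = true)
  rw [Nat.testBit_and, Nat.testBit_and]
  rcases h s hs1 hs2 with h | ⟨h4, h⟩
  · left
    rw [h, hm s 357 hs1 hs2 (by norm_num)]; rfl
    rw [Nat.testBit_or, Nat.testBit_xor, testBit_full]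
    have : (conf (initX rows) (row t)).testBit 357 = false := by
      rw [← Bool.not_eq_true, testBit_conf _ _ _ (by norm_num)]
      rintro ⟨u, hu, h5⟩
      obtain ⟨a, ha, v, hv, h6⟩ := (testBit_initX _ _).1 h5
      omega
    simp [this]
  · right
    have hk := List.idxOf_lt_length_of_mem (hrow s hs1 hs2 h4)
    refine ⟨h4, ?_⟩
    rw [h, hm s _ hs1 hs2 (by omega)]; rfl
    rw [Nat.testBit_or, Nat.testBit_xor, testBit_full, Nat.testBit_two_pow]
    by_cases hst : row s = row t
    · simp [hst, ← hidef]
    · have : (conf (initX rows) (row t)).testBit (rows.idxOf (row s)) = false := by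
        rw [← Bool.not_eq_true, testBit_conf _ _ _ (by omega)]
        rintro ⟨u, hu, h5⟩
        obtain ⟨a, ha, v, hv, h6⟩ := (testBit_initX _ _).1 h5
        have hva : a = rows.idxOf (row s) := by omega
        have hvu : v = u := by omega
        subst hva hvu
        rw [List.getElem_idxOf hk] at hv
        exact hst ((hs.same s hs1 hs2 v hv).symm.trans (hs.same t h1 h2 v hu))
      rw [this]
      simp; left; omega

/-- A state refuted by the search is not compatible with any solution. -/
theorem search_sound {row : ℕ → ℕ} {cov : ℕ} {rows : List ℕ} (hs : Sol row)
    (hlen : rows.length ≤ 357)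
    (hrow : ∀ t, 1 ≤ t → t ≤ 84 → cov.testBit (363 * t) = false → row t ∈ rows)
    (n X : ℕ) (hX : search (keeps (initX rows) rows 1) (initX rows) n X = true) :
    ¬ Inv row cov rows X := by
  induction n generalizing X with
  | zero => exact absurd hX (by simp [search])
  | succ n ih =>
    intro hI
    set CT := keeps (initX rows) rows 1 with hCT
    have e : search CT (initX rows) (n + 1) X =
      Bool.rec (loop (attempt CT (initX rows) X (search CT (initX rows) n)) 358 (fld X (pick X)))
        false (Nat.ble (Nat.pow 2 357) (fld X (pick X))) := rfl
    rw [e] at hX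
    obtain ⟨h1, h2⟩ := pick_mem X
    set t := pick X with ht
    have hlt : fld X t < 2 ^ 357 := by
      by_contra hc
      have hb : Nat.ble (Nat.pow 2 357) (fld X t) = true := Nat.ble_eq_true_of_le (not_lt.1 hc)
      rw [hb] at hX
      exact absurd hX (by simp)
    have hb : Nat.ble (Nat.pow 2 357) (fld X t) = false := by
      rw [← Bool.not_eq_true]; exact fun h => absurd (Nat.le_of_ble_eq_true h) (not_le.2 hlt)
    rw [hb] at hX
    have hI' := hI t h1 h2
    rw [← testBit_fld _ _ _ (by norm_num), Nat.testBit_lt_two_pow hlt] at hI'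
    simp only [Bool.false_eq_true, false_or] at hI'
    obtain ⟨h3, h4⟩ := hI'
    have hk := List.idxOf_lt_length_of_mem (hrow t h1 h2 h3)
    rw [← testBit_fld _ _ _ (by omega)] at h4
    have h5 := loop_sound _ _ _ (fld_lt _ _) hX _ h4
    have hI2 := hI.mask hs hlen hrow t h1 h2 h3
    rw [← hCT] at hI2
    set u := label (2 ^ rows.idxOf (row t))
    set X' := Nat.land X (mask CT u) with hX'
    have e2 : attempt CT (initX rows) X (search CT (initX rows) n) u =
      Bool.rec (Nat.beq (fld X' (colOf (zeros X'))) 0)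
        (search CT (initX rows) n (Nat.lor X' (cover (initX rows) u))) (Nat.beq (zeros X') 0) := rfl
    rw [e2] at h5
    cases hz : Nat.beq (zeros X') 0 with
    | false =>
      rw [hz] at h5
      exact hI2.fld_ne hlen hrow _ (colOf_mem _).1 (colOf_mem _).2 (Nat.eq_of_beq_eq_true h5)
    | true =>
      rw [hz] at h5
      exact ih _ h5 (hI2.lor _)

theorem engine_sound {row : ℕ → ℕ} {cov : ℕ} {rows : List ℕ} (hs : Sol row)
    (hrow : ∀ t, 1 ≤ t → t ≤ 84 → cov.testBit (363 * t) = false → row t ∈ rows) :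
    engine cov rows ≠ true := by
  intro h
  have hlen : rows.length ≤ 357 := by
    by_contra hc
    have hb : Nat.ble rows.length 357 = false := by
      rw [← Bool.not_eq_true]; exact fun h => hc (Nat.le_of_ble_eq_true h)
    unfold engine at h
    rw [hb] at h
    exact absurd h (by simp)
  have e : engine cov rows = Bool.rec false (search (keeps (initX rows) rows 1) (initX rows) 12
    (Nat.lor (initX rows) (Nat.shiftLeft (Nat.lor cov (Nat.mul 30 cov)) 357)))
    (Nat.ble rows.length 357) := rfl
  rw [e, Nat.ble_eq_true_of_le hlen] at h
  refine search_sound hs hlen hrow 12 _ h ?_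
  intro t h1 h2
  change (initX rows ||| ((cov ||| 30 * cov) <<< 357)).testBit _ = true ∨
    (_ ∧ (initX rows ||| ((cov ||| 30 * cov) <<< 357)).testBit _ = true)
  rw [Nat.testBit_or, Nat.testBit_or]
  cases hc : cov.testBit (363 * t) with
  | true =>
    left
    simp [Nat.testBit_shiftLeft, hc]
  | false =>
    right
    have hk := List.idxOf_lt_length_of_mem (hrow t h1 h2 hc)
    have : (initX rows).testBit (363 * t + rows.idxOf (row t)) = true :=
      (testBit_initX _ _).2 ⟨_, hk, t, by rw [List.getElem_idxOf hk]; exact hs.self t h1 h2, rfl⟩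
    simp [this]

theorem disj_sound (D : ℕ) (rows : List ℕ) (k : List ℕ → Bool) (h : disj D rows k = true) :
    ∃ l, k l = true ∧ ∀ p ∈ rows, spread p &&& D = 0 → p ∈ l := by
  suffices H : ∀ acc, (List.rec (fun acc => k acc) (fun p _ ih acc =>
      Bool.rec (tick (ih acc)) (tick (ih (p :: acc))) (Nat.beq (Nat.land (spread p) D) 0)) rows :
      List ℕ → Bool) acc = true →
      ∃ l, k l = true ∧ (∀ p ∈ rows, spread p &&& D = 0 → p ∈ l) ∧ acc ⊆ l by
    obtain ⟨l, h1, h2, -⟩ := H [] h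
    exact ⟨l, h1, h2⟩
  clear h
  induction rows with
  | nil => exact fun acc h => ⟨acc, h, by simp, by simp⟩
  | cons p rows ih =>
    intro acc h
    change Bool.rec (_) (_) (Nat.beq (Nat.land (spread p) D) 0) = true at h
    cases hb : Nat.beq (Nat.land (spread p) D) 0 with
    | false =>
      rw [hb] at h
      obtain ⟨l, h1, h2, h3⟩ := ih acc h
      refine ⟨l, h1, ?_, h3⟩
      intro x hx hxD
      rcases List.mem_cons.1 hx with rfl | hx
      · have : Nat.beq (Nat.land (spread x) D) 0 = true := Nat.beq_eq ▸ hxD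
        rw [this] at hb; exact absurd hb (by simp)
      · exact h2 x hx hxD
    | true =>
      rw [hb] at h
      obtain ⟨l, h1, h2, h3⟩ := ih (p :: acc) h
      refine ⟨l, h1, ?_, fun x hx => h3 (List.mem_cons_of_mem _ hx)⟩
      intro x hx hxD
      rcases List.mem_cons.1 hx with rfl | hx
      · exact h3 List.mem_cons_self
      · exact h2 x hx hxD

theorem spread_land {p p' : ℕ} (h : ∀ u ∈ cols p, u ∉ cols p') : spread p &&& spread p' = 0 := by
  apply Nat.eq_of_testBit_eq
  intro n
  rw [Nat.testBit_and, Nat.zero_testBit, ← Bool.not_eq_true, Bool.and_eq_true, testBit_spread,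
    testBit_spread]
  rintro ⟨⟨t, ht, rfl⟩, s, hs, h2⟩
  have : t = s := by omega
  exact h t ht (this ▸ hs)

/-- If all `q` parts of the search below the row `d` are refuted, where the parts branch over the rows
through the column `c`, then no solution contains `d`. -/
theorem part_sound {row : ℕ → ℕ} (hs : Sol row) {d c q : ℕ} (hq : 0 < q)
    (hpart : ∀ i < q, part d c q i = true) (hc1 : 1 ≤ c) (hc2 : c ≤ 84) (hcd : c ∉ cols d)
    (t₀ : ℕ) (ht1 : 1 ≤ t₀) (ht2 : t₀ ≤ 84) (hd : row t₀ = d) : False := by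
  -- rows of the solution are equal or disjoint
  have hdisj : ∀ t s, 1 ≤ t → t ≤ 84 → 1 ≤ s → s ≤ 84 → row t ≠ row s →
      spread (row t) &&& spread (row s) = 0 := by
    intro t s h1 h2 h3 h4 hne
    exact spread_land fun u hu hu' =>
      hne ((hs.same t h1 h2 u hu).symm.trans (hs.same s h3 h4 u hu'))
  have hne : row c ≠ row t₀ := by
    intro h
    exact hcd (hd ▸ h ▸ hs.self c hc1 hc2)
  obtain ⟨rows, h1, h2⟩ := disj_sound _ _ _ (hpart (row c % q) (Nat.mod_lt _ hq))
  have hmem : row c ∈ rows := h2 _ (hs.mem c hc1 hc2) (hd ▸ hdisj _ _ hc1 hc2 ht1 ht2 hne)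
  have hkey : disj (spread (row c)) rows
      (fun rows' => engine (Nat.lor (spread d) (spread (row c))) rows') = true := by
    clear h2
    suffices H : ∀ l : List ℕ, (List.rec true (fun p _ ih =>
      Bool.rec (tick ih)
        (Bool.rec false (tick ih)
          (disj (spread p) rows fun rows' => engine (Nat.lor (spread d) (spread p)) rows'))
        (Bool.rec false (Nat.beq (Nat.land (spread p) (unit c)) (unit c))
          (Nat.beq (Nat.mod p q) (row c % q)))) l : Bool) = true → row c ∈ l →
        disj (spread (row c)) rows
          (fun rows' => engine (Nat.lor (spread d) (spread (row c))) rows') = true from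
      H rows h1 hmem
    clear h1 hmem
    intro l
    induction l with
    | nil => intro _ h; simp at h
    | cons p l ih =>
      intro h hm
      change Bool.rec _ (Bool.rec false _ _) _ = true at h
      by_cases hp : p = row c
      · subst hp
        have hb : Nat.beq (Nat.land (spread (row c)) (unit c)) (unit c) = true := by
          rw [Nat.beq_eq]
          apply Nat.eq_of_testBit_eq
          intro n
          change (spread (row c) &&& unit c).testBit n = _
          rw [Nat.testBit_and, testBit_unit]
          by_cases hn : 363 * c = n
          · have : (spread (row c)).testBit n = true :=
              (testBit_spread _ _).2 ⟨c, hs.self c hc1 hc2, hn.symm⟩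
            simp [this]
          · simp [hn]
        have hb2 : Nat.beq (Nat.mod (row c) q) (row c % q) = true := by
          rw [Nat.beq_eq]; rfl
        rw [hb2, hb] at h
        cases hk : disj (spread (row c)) rows
            fun rows' => engine (Nat.lor (spread d) (spread (row c))) rows' with
        | true => rfl
        | false => rw [hk] at h; exact absurd h (by simp)
      · have hm' : row c ∈ l := by
          rcases List.mem_cons.1 hm with h | h
          · exact absurd h.symm hp
          · exact h
        refine ih ?_ hm'
        revert h
        cases (Bool.rec false (Nat.beq (Nat.land (spread p) (unit c)) (unit c))
          (Nat.beq (Nat.mod p q) (row c % q)) : Bool) with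
        | false => exact id
        | true =>
          cases disj (spread p) rows fun rows' => engine (Nat.lor (spread d) (spread p)) rows' with
          | false => intro h; exact absurd h (by simp)
          | true => exact id
  obtain ⟨rows', h3, h4⟩ := disj_sound _ _ _ hkey
  refine engine_sound hs (fun t htl htu hcov => ?_) h3
  change (spread d ||| spread (row c)).testBit _ = false at hcov
  rw [Nat.testBit_or, Bool.or_eq_false_iff, ← Bool.not_eq_true, ← Bool.not_eq_true,
    testBit_spread, testBit_spread] at hcov
  have hself := hs.self t htl htu
  have n1 : row t ≠ row t₀ := fun h => hcov.1 ⟨t, hd ▸ h ▸ hself, rfl⟩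
  have n2 : row t ≠ row c := fun h => hcov.2 ⟨t, h ▸ hself, rfl⟩
  exact h4 _ (h2 _ (hs.mem t htl htu) (hd ▸ hdisj _ _ htl htu ht1 ht2 n1))
    (hdisj _ _ htl htu hc1 hc2 n2)
end Search

/-! ### The computation -/

namespace Search
set_option maxHeartbeats 0 in
/-- None of the rows of `degRows` belongs to an exact cover. For each of them the search branches
over the rows through a further column, split into 17 parts by their residues modulo `17`. -/
theorem checks :
    (∀ i < 17, part 10165092726542340 65 17 i = true) ∧
    (∀ i < 17, part 13554925813893891 80 17 i = true) ∧
    (∀ i < 17, part 15811145165311242 1 17 i = true) ∧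
    (∀ i < 17, part 16100364069507850 1 17 i = true) ∧
    (∀ i < 17, part 17228437397707276 4 17 i = true) ∧
    (∀ i < 17, part 17504423204164110 61 17 i = true) ∧
    (∀ i < 17, part 17793599209213450 38 17 i = true) ∧
    (∀ i < 17, part 20059774682599429 52 17 i = true) := by
  refine ⟨?_, ?_, ?_, ?_, ?_, ?_, ?_, ?_⟩ <;> intro i hi <;> interval_cases i <;> decide +kernel
end Search

namespace Search

noncomputable section

/-! ### Exponents and rows -/

/-- The exponents of a root `α` of `X ^ 9 + X ^ 4 + 1`: the bits of the `n`-th 12-bit entry are the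
coordinates of `α ^ n` in the basis `1, α, …, α ^ 8`. -/
def expTable : ℕ :=
  5311661713825943054023675263375119175891454658296066219606564584579011820476998259878754913905230321197010967529932727327369189310901182267659252277933944776018668861335124685973889296579384326978713706740499056973123347385974220604009822542397279823459272119911229167045128279019692961901282798714246290572755215089993119890812914742521179161342598183222282024911397093167813906916457227161180203478012214844948382769002824536220270952147085982943848315756631959169719748154327312491666107352922108591782448423127681547207085855225365367260912740001870898960083532173099679623365851677118294390896250094665100235603763292822409795277404314637692146892201795623626504172484369836551271514791430367871883555061589051375058204323092837154221870784423952323015763308166695733791108501840100899346317021322954151375928492883140605618577943690629230104389946444048699697151262284844299192499940131457198731952296225525570767955319885569339392901325293620353892853767128005798947253562194420685749301428705512020163044930609012613058078032328740753859936691703306820234479219573147634570709175196479847453230056082506717320816805107222680866171061913033923297462380867071515409026787238433136515212499116828662209170239138849690932493920054818784910011198314300482730388364661858319369516932391022103922955095364151034432438533289160682886520535801913180170970008915265969449216664666348772157260466796203491320396840816596127836557583289844908305238674694185031244226576561462858025778214062781625380378347754866880887207105157289728463220152490660453376558924612431878382289374203124635644198146293036827894573702250633801934103967370346429465849666234815269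89216231138246389817527986190788025818811590409088713445644884475088577088763135008787600053473301302277174798414359973910463427805453063320244217906932907296031314524182763441661348212121601

/-- The bits of `expo n` are the coordinates of `α ^ n`. -/
def expo (n : ℕ) : ℕ := Nat.land (Nat.shiftRight expTable (Nat.mul 12 n)) 4095

/-- The Zech logarithm: `1 + α ^ n = α ^ zech n`. -/
def zech (n : ℕ) : ℕ := Nat.land (Nat.shiftRight zechTable (Nat.mul 12 n)) 4095

/-- The column of the multiples of `⟨1, α ^ n⟩`. -/
def idOf (n : ℕ) : ℕ := byte idTable n

/-- An exponent `r` such that `⟨1, α ^ r⟩` is in column `t`. -/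
def rep (t : ℕ) : ℕ := Nat.land (Nat.shiftRight repTable (Nat.mul 12 t)) 4095

/-- The difference of exponents. -/
def dif (a b : ℕ) : ℕ := Nat.mod (Nat.sub (Nat.add a 511) b) 511

/-- The sum of exponents. -/
def sm (a b : ℕ) : ℕ := Nat.mod (Nat.add a b) 511

/-- The columns of the seven planes of `⟨1, α ^ r, α ^ l⟩`. -/
def ids (r l : ℕ) : List ℕ :=
  force (idOf r) fun a => force (idOf l) fun b =>
  force (idOf (sm l (zech (dif r l)))) fun c => force (idOf (dif l r)) fun d =>
  force (idOf (dif (zech l) r)) fun e => force (idOf (dif l (zech r))) fun f =>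
  force (idOf (dif (zech l) (zech r))) fun g => [a, b, c, d, e, f, g]

/-- A set of columns as a number. -/
def msk (s : List ℕ) : ℕ :=
  List.rec 0 (fun t _ ih => Nat.lor (Nat.shiftLeft 1 t) ih) s

/-- The sum of the bits of `msk s`, which agrees with it exactly if `s` has no repetition. -/
def smsk (s : List ℕ) : ℕ :=
  List.rec 0 (fun t _ ih => Nat.add (Nat.shiftLeft 1 t) ih) s

/-- Whether `m` belongs to the list `ms`. -/
def isIn (m : ℕ) (ms : List ℕ) : Bool :=
  List.rec false (fun a _ ih => Bool.rec ih true (Nat.beq m a)) ms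

/-- Whether `k` holds for the set of columns `s`, unless `s` has a repetition or a member
below `t`. -/
def ifValid (t : ℕ) (s : List ℕ) (k : ℕ → Bool) : Bool :=
  force (msk s) fun m =>
    Bool.rec true (Bool.rec true (k m) (Nat.beq (Nat.land m (Nat.sub (Nat.pow 2 t) 1)) 0))
      (Nat.beq m (smsk s))

/-- Whether `k` holds for all numbers below `n`. -/
def allBelow (k : ℕ → Bool) (n : ℕ) : Bool :=
  Nat.rec true (fun l ih => Bool.rec false ih (k l)) n

/-- Passes to `k` the sets of columns of those members of `rows` whose first column is `t`. -/
def rowsAt (t : ℕ) (rows : List ℕ) (k : List ℕ → Bool) : Bool :=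
  (List.rec (fun acc => k acc) (fun p _ ih acc =>
    Bool.rec (tick (ih acc)) (force (msk (cols p)) fun m => tick (ih (m :: acc)))
      (Nat.beq (byte p 0) t)) rows :
    List ℕ → Bool) []

/-- Whether `rowTable` contains all valid rows `ids (rep t) l` with smallest member `t`. -/
def complete (t : ℕ) : Bool :=
  rowsAt t rowTable fun ms => force (rep t) fun r =>
    allBelow (fun l => ifValid t (ids r l) fun m => isIn m ms) 511

/-- The rows to be excluded, one from each Frobenius class of rows of degenerate blocks. -/
def degRows : List ℕ :=
  [10165092726542340, 13554925813893891, 15811145165311242, 16100364069507850,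
   17228437397707276, 17504423204164110, 17793599209213450, 20059774682599429]

/-- Multiplication of an exponent by `2 ^ e`. -/
def frob (e n : ℕ) : ℕ := Nat.mod (Nat.mul (Nat.pow 2 e) n) 511

/-- The exponent of `α ^ (73 * i) + α ^ r * α ^ (73 * j)`. -/
def degExp (r i j : ℕ) : ℕ := sm (Nat.mul 73 i) (zech (dif (sm r (Nat.mul 73 j)) (Nat.mul 73 i)))

/-- Whether the row of each degenerate block through `1` and `α ^ rep t` is conjugate to a member
of `degRows`. -/
def degenerate (t : ℕ) : Bool :=
  force (rep t) fun r => allBelow (fun i => allBelow (fun j => force (degExp r i j) fun l =>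
    ifValid 1 (ids r l) fun _ => Bool.not (allBelow (fun e =>
      Bool.not (isIn (msk (ids (frob e r) (frob e l))) (degRows.map fun d => msk (cols d)))) 9))
    7) 7

end

theorem testBit_msk (s : List ℕ) (n : ℕ) : (msk s).testBit n = true ↔ n ∈ s := by
  induction s with
  | nil => simp [msk]
  | cons a s ih =>
    change ((1 <<< a) ||| msk s).testBit n = true ↔ _
    rw [Nat.testBit_or, Bool.or_eq_true, ih, Nat.one_shiftLeft, Nat.testBit_two_pow]
    simp [eq_comm]

theorem mem_iff_of_msk_eq {s s' : List ℕ} (h : msk s = msk s') (n : ℕ) : n ∈ s ↔ n ∈ s' := by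
  rw [← testBit_msk, h, testBit_msk]

theorem msk_eq_of_mem_iff {s s' : List ℕ} (h : ∀ n, n ∈ s ↔ n ∈ s') : msk s = msk s' :=
  Nat.eq_of_testBit_eq fun n => Bool.eq_iff_iff.2 (by rw [testBit_msk, testBit_msk, h])

theorem msk_eq_smsk {s : List ℕ} (h : s.Nodup) : msk s = smsk s := by
  have h1 : smsk s = (s.map fun i => 2 ^ i).sum := by
    clear h
    induction s with
    | nil => rfl
    | cons a s ih =>
      change (1 <<< a) + smsk s = _
      rw [ih, Nat.one_shiftLeft, List.map_cons, List.sum_cons]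
  have h2 : (msk s).bitIndices.toFinset = s.toFinset := by
    ext n
    rw [List.mem_toFinset, List.mem_toFinset, Nat.mem_bitIndices, testBit_msk]
  rw [h1, ← List.sum_toFinset _ h, ← h2, Finset.sum_toFinset_bitIndices_two_pow]

theorem ifValid_sound {t : ℕ} {s : List ℕ} {k : ℕ → Bool} (h : ifValid t s k = true)
    (ht : ∀ a ∈ s, t ≤ a) (hs : s.Nodup) : k (msk s) = true := by
  have e : ifValid t s k = Bool.rec true
    (Bool.rec true (k (msk s)) (Nat.beq (Nat.land (msk s) (Nat.sub (Nat.pow 2 t) 1)) 0))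
      (Nat.beq (msk s) (smsk s)) := rfl
  have h1 : Nat.beq (msk s) (smsk s) = true := by rw [Nat.beq_eq]; exact msk_eq_smsk hs
  have h2 : Nat.beq (Nat.land (msk s) (Nat.sub (Nat.pow 2 t) 1)) 0 = true := by
    rw [Nat.beq_eq]
    apply Nat.eq_of_testBit_eq
    intro n
    change (msk s &&& (2 ^ t - 1)).testBit n = _
    rw [Nat.testBit_and, Nat.testBit_two_pow_sub_one, Nat.zero_testBit, ← Bool.not_eq_true,
      Bool.and_eq_true, testBit_msk, decide_eq_true_eq]
    rintro ⟨h3, h4⟩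
    exact absurd (ht n h3) (not_le.2 h4)
  rw [e, h1, h2] at h
  exact h

theorem allBelow_sound {k : ℕ → Bool} {n : ℕ} (h : allBelow k n = true) (l : ℕ) (hl : l < n) :
    k l = true := by
  induction n with
  | zero => omega
  | succ n ih =>
    change Bool.rec false (allBelow k n) (k n) = true at h
    cases hk : k n with
    | false => rw [hk] at h; exact absurd h (by simp)
    | true =>
      rw [hk] at h
      rcases Nat.lt_succ_iff_lt_or_eq.1 hl with h1 | rfl
      · exact ih h h1
      · exact hk

theorem allBelow_complete {k : ℕ → Bool} {n : ℕ} (h : ∀ l < n, k l = true) :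
    allBelow k n = true := by
  induction n with
  | zero => rfl
  | succ n ih =>
    change Bool.rec false (allBelow k n) (k n) = true
    rw [h n (Nat.lt_succ_self n)]
    exact ih fun l hl => h l (Nat.lt_succ_of_lt hl)

theorem isIn_sound {m : ℕ} {ms : List ℕ} (h : isIn m ms = true) : m ∈ ms := by
  induction ms with
  | nil => exact absurd h (by simp [isIn])
  | cons a ms ih =>
    change Bool.rec (isIn m ms) true (Nat.beq m a) = true at h
    cases hb : Nat.beq m a with
    | false => rw [hb] at h; exact List.mem_cons_of_mem _ (ih h)
    | true => rw [Nat.beq_eq] at hb; exact hb ▸ List.mem_cons_self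

theorem rowsAt_sound {t : ℕ} {rows : List ℕ} {k : List ℕ → Bool} (h : rowsAt t rows k = true) :
    ∃ ms, k ms = true ∧ ∀ m ∈ ms, ∃ p ∈ rows, msk (cols p) = m := by
  suffices H : ∀ acc, (List.rec (fun acc => k acc) (fun p _ ih acc =>
      Bool.rec (tick (ih acc)) (force (msk (cols p)) fun m => tick (ih (m :: acc)))
        (Nat.beq (byte p 0) t)) rows : List ℕ → Bool) acc = true →
      ∃ ms, k ms = true ∧ ∀ m ∈ ms, m ∈ acc ∨ ∃ p ∈ rows, msk (cols p) = m by
    obtain ⟨l, h1, h2⟩ := H [] h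
    exact ⟨l, h1, fun m hm => (h2 m hm).resolve_left (by simp)⟩
  clear h
  induction rows with
  | nil => exact fun acc h => ⟨acc, h, fun m hm => Or.inl hm⟩
  | cons p rows ih =>
    intro acc h
    change Bool.rec (_) (_) (Nat.beq (byte p 0) t) = true at h
    cases hb : Nat.beq (byte p 0) t with
    | false =>
      rw [hb] at h
      obtain ⟨l, h1, h2⟩ := ih acc h
      exact ⟨l, h1, fun m hm => (h2 m hm).imp_right fun ⟨q, hq, e⟩ =>
        ⟨q, List.mem_cons_of_mem _ hq, e⟩⟩
    | true =>
      rw [hb] at h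
      obtain ⟨l, h1, h2⟩ := ih (msk (cols p) :: acc) h
      refine ⟨l, h1, fun m hm => ?_⟩
      rcases h2 m hm with h3 | ⟨q, hq, e⟩
      · rcases List.mem_cons.1 h3 with h4 | h4
        · exact Or.inr ⟨p, List.mem_cons_self, h4.symm⟩
        · exact Or.inl h4
      · exact Or.inr ⟨q, List.mem_cons_of_mem _ hq, e⟩

theorem complete_all : ∀ t < 85, t = 0 ∨ complete t = true := by decide +kernel

theorem degenerate_all : ∀ t < 85, t = 0 ∨ degenerate t = true := by decide +kernel

theorem exists_row {t l : ℕ} (ht : t ≠ 0) (ht' : t ≤ 84) (hl : l < 511)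
    (h1 : ∀ a ∈ ids (rep t) l, t ≤ a) (h2 : (ids (rep t) l).Nodup) :
    ∃ p ∈ rowTable, msk (cols p) = msk (ids (rep t) l) := by
  obtain ⟨ms, h3, h4⟩ := rowsAt_sound ((complete_all t (by omega)).resolve_left ht)
  rw [force_eq] at h3
  have h5 := ifValid_sound (allBelow_sound h3 l hl) h1 h2
  exact h4 _ (isIn_sound h5)

theorem exists_degRow {t i j : ℕ} (ht : t ≠ 0) (ht' : t ≤ 84) (hi : i < 7) (hj : j < 7)
    (h1 : ∀ a ∈ ids (rep t) (degExp (rep t) i j), 1 ≤ a)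
    (h2 : (ids (rep t) (degExp (rep t) i j)).Nodup) :
    ∃ e < 9, ∃ d ∈ degRows,
      msk (cols d) = msk (ids (frob e (rep t)) (frob e (degExp (rep t) i j))) := by
  have h0 : degenerate t = true := (degenerate_all t (by omega)).resolve_left ht
  unfold degenerate at h0
  rw [force_eq] at h0
  have h0' := allBelow_sound (allBelow_sound h0 i hi) j hj
  rw [force_eq] at h0'
  have h3 := ifValid_sound h0' h1 h2
  by_contra hc
  push Not at hc
  rw [allBelow_complete] at h3
  · exact absurd h3 (by simp)
  · intro e he
    rw [Bool.not_eq_true']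
    by_contra h4
    rw [Bool.not_eq_false] at h4
    obtain ⟨d, hd, h5⟩ := List.mem_map.1 (isIn_sound h4)
    exact hc e he d hd h5

theorem degRow_unique : ∀ d ∈ degRows, ∀ p ∈ rowTable, msk (cols p) = msk (cols d) → p = d := by
  decide +kernel

theorem Sol.not_mem_degRows {row : ℕ → ℕ} (hs : Sol row) (t : ℕ) (h1 : 1 ≤ t) (h2 : t ≤ 84) :
    row t ∉ degRows := by
  intro h
  obtain ⟨c1, c2, c3, c4, c5, c6, c7, c8⟩ := checks
  simp only [degRows, List.mem_cons, List.not_mem_nil, or_false] at h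
  rcases h with h | h | h | h | h | h | h | h
  · exact part_sound hs (by norm_num) c1 (by norm_num) (by norm_num) (by decide +kernel) t h1 h2 h
  · exact part_sound hs (by norm_num) c2 (by norm_num) (by norm_num) (by decide +kernel) t h1 h2 h
  · exact part_sound hs (by norm_num) c3 (by norm_num) (by norm_num) (by decide +kernel) t h1 h2 h
  · exact part_sound hs (by norm_num) c4 (by norm_num) (by norm_num) (by decide +kernel) t h1 h2 h
  · exact part_sound hs (by norm_num) c5 (by norm_num) (by norm_num) (by decide +kernel) t h1 h2 h
  · exact part_sound hs (by norm_num) c6 (by norm_num) (by norm_num) (by decide +kernel) t h1 h2 h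
  · exact part_sound hs (by norm_num) c7 (by norm_num) (by norm_num) (by decide +kernel) t h1 h2 h
  · exact part_sound hs (by norm_num) c8 (by norm_num) (by norm_num) (by decide +kernel) t h1 h2 h

theorem expo_zero : expo 0 = 1 := by decide +kernel

theorem expo_step : ∀ n < 510, expo n < 512 ∧
    expo (n + 1) = Nat.xor (Nat.mul 2 (expo n)) (Nat.mul 529 (Nat.shiftRight (expo n) 8)) := by
  decide +kernel

theorem zech_spec : ∀ n < 511, n ≠ 0 →
    zech n ≠ 0 ∧ zech n < 511 ∧ Nat.xor (expo n) 1 = expo (zech n) := by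
  decide +kernel

theorem idOf_spec : ∀ n < 511, n ≠ 0 → idOf (511 - n) = idOf n ∧ idOf (zech n) = idOf n ∧
    idOf n ≤ 84 ∧ (idOf n = 0 → n % 73 = 0) := by
  decide +kernel

theorem rep_idOf : ∀ n < 511, n ≠ 0 → rep (idOf n) ∈
    [n, 511 - n, zech n, 511 - zech n, zech (511 - n), 511 - zech (511 - n)] := by
  decide +kernel

theorem rep_spec : ∀ t < 85, rep t ≠ 0 ∧ rep t < 511 ∧ idOf (rep t) = t := by decide +kernel

end Search

open Search

namespace Design

/-! ### The field and its primitive element -/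

theorem two_eq_zero : (2 : F9) = 0 := CharTwo.two_eq_zero

theorem add_self (x : F9) : x + x = 0 := CharTwo.add_self_eq_zero x

theorem card_F9 : Nat.card F9 = 512 := by
  rw [GaloisField.card 2 9 (by norm_num)]; norm_num

/-- In characteristic two, `β ^ 9 = β ^ 4 + 1` implies `β ^ 512 = β`, by nine squarings. -/
theorem pow_512 {R : Type*} [CommRing R] (h2 : (2 : R) = 0) {β : R} (h : β ^ 9 = β ^ 4 + 1) :
    β ^ 512 = β := by
  have h10 : β ^ 10 = β ^ 5 + β := by linear_combination β * h
  have h12 : β ^ 12 = β ^ 7 + β ^ 3 := by linear_combination β ^ 3 * h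
  have h14 : β ^ 14 = β ^ 5 + β ^ 4 + 1 := by linear_combination (β ^ 5 + 1) * h
  have h16 : β ^ 16 = β ^ 7 + β ^ 6 + β ^ 2 := by linear_combination (β ^ 7 + β ^ 2) * h
  have h32 : β ^ 32 = β ^ 7 + β ^ 5 + β ^ 3 + 1 := by
    linear_combination (β ^ 16 + β ^ 7 + β ^ 6 + β ^ 2) * h16 + h14 + h12 +
      (β ^ 13 + β ^ 9 + β ^ 8 + β ^ 4) * h2
  have h64 : β ^ 64 = β ^ 6 + β ^ 4 + β := by
    linear_combination (β ^ 32 + β ^ 7 + β ^ 5 + β ^ 3 + 1) * h32 + h14 + h10 +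
      (β ^ 12 + β ^ 10 + β ^ 7 + β ^ 8 + β ^ 5 + β ^ 3 + β ^ 5 + 1) * h2
  have h128 : β ^ 128 = β ^ 8 + β ^ 7 + β ^ 3 + β ^ 2 := by
    linear_combination (β ^ 64 + β ^ 6 + β ^ 4 + β) * h64 + h12 +
      (β ^ 10 + β ^ 7 + β ^ 5) * h2
  have h256 : β ^ 256 = β ^ 7 + β ^ 5 + β ^ 2 + 1 := by
    linear_combination (β ^ 128 + β ^ 8 + β ^ 7 + β ^ 3 + β ^ 2) * h128 + h16 + h14 +
      (β ^ 15 + β ^ 11 + β ^ 10 + β ^ 10 + β ^ 9 + β ^ 5 + β ^ 6 + β ^ 4) * h2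
  linear_combination (β ^ 256 + β ^ 7 + β ^ 5 + β ^ 2 + 1) * h256 + h14 + h10 +
      (β ^ 12 + β ^ 9 + β ^ 7 + β ^ 7 + β ^ 5 + β ^ 2 + β ^ 5 + β ^ 4 + 1) * h2

open Polynomial in
theorem exists_root : ∃ α : F9, α ^ 9 = α ^ 4 + 1 := by
  have hd : (X ^ 9 + X ^ 4 + 1 : F9[X]) ∣ X ^ 512 - X := by
    rw [← AdjoinRoot.mk_eq_zero, map_sub, map_pow, sub_eq_zero, AdjoinRoot.mk_X]
    have h2 : (2 : AdjoinRoot (X ^ 9 + X ^ 4 + 1 : F9[X])) = 0 := by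
      have := congrArg (AdjoinRoot.of (X ^ 9 + X ^ 4 + 1 : F9[X])) two_eq_zero
      rwa [map_ofNat, map_zero] at this
    refine pow_512 h2 ?_
    have h := AdjoinRoot.eval₂_root (X ^ 9 + X ^ 4 + 1 : F9[X])
    simp only [eval₂_add, eval₂_pow, eval₂_X, eval₂_one] at h
    linear_combination h - (AdjoinRoot.root (X ^ 9 + X ^ 4 + 1 : F9[X]) ^ 4 + 1) * h2
  have hs : (X ^ 512 - X : F9[X]).Splits := by
    have := Polynomial.splits_X_pow_nat_card_sub_X (K := F9)
    rwa [card_F9] at this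
  have h0 : (X ^ 512 - X : F9[X]) ≠ 0 := FiniteField.X_pow_card_sub_X_ne_zero F9 (by norm_num)
  obtain ⟨α, hα⟩ := (hs.of_dvd h0 hd).exists_eval_eq_zero (by
    have : (X ^ 9 + X ^ 4 + 1 : F9[X]).degree = 9 := by compute_degree!
    rw [this]; norm_num)
  refine ⟨α, ?_⟩
  simp only [eval_add, eval_pow, eval_X, eval_one] at hα
  linear_combination hα - (α ^ 4 + 1) * two_eq_zero

/-- The element of `F9` with the bits of `n` as coordinates in the powers of `α`. -/
noncomputable def ev (α : F9) (n : ℕ) : F9 :=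
  ∑ i ∈ Finset.range 10, if n.testBit i then α ^ i else 0

theorem ev_xor (α : F9) (a b : ℕ) : ev α (a ^^^ b) = ev α a + ev α b := by
  unfold ev
  rw [← Finset.sum_add_distrib]
  refine Finset.sum_congr rfl fun i _ => ?_
  rw [Nat.testBit_xor]
  cases a.testBit i <;> cases b.testBit i <;> simp [add_self]

theorem ev_double (α : F9) (a : ℕ) (ha : a < 512) : ev α (2 * a) = α * ev α a := by
  unfold ev
  have h9 : a.testBit 9 = false := Nat.testBit_lt_two_pow (by simpa using ha)
  rw [Finset.sum_range_succ', Finset.sum_range_succ (n := 9), h9]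
  have h0 : (2 * a).testBit 0 = false := by simp
  have hs : ∀ k, (2 * a).testBit (k + 1) = a.testBit k := fun k => by
    rw [Nat.testBit_succ, Nat.mul_div_cancel_left _ two_pos]
  simp only [h0, hs, Bool.false_eq_true, if_false, add_zero, Finset.mul_sum]
  refine Finset.sum_congr rfl fun i _ => ?_
  split_ifs
  · rw [pow_succ']
  · rw [mul_zero]

theorem ev_one (α : F9) : ev α 1 = 1 := by
  unfold ev
  rw [Finset.sum_range_succ']
  simp [Nat.testBit_succ]

theorem ev_mod {α : F9} (hα : α ^ 9 = α ^ 4 + 1) (a : ℕ) (ha : a < 512) :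
    ev α (529 * (a >>> 8)) = 0 := by
  have : a >>> 8 = 0 ∨ a >>> 8 = 1 := by rw [Nat.shiftRight_eq_div_pow]; omega
  rcases this with h | h
  · rw [h]; simp [ev]
  · rw [h]
    simp only [ev, Finset.sum_range_succ, Finset.sum_range_zero]
    norm_num [Nat.testBit, Nat.shiftRight_eq_div_pow]
    linear_combination hα + (α ^ 4 + 1) * two_eq_zero

theorem ev_expo {α : F9} (hα : α ^ 9 = α ^ 4 + 1) (n : ℕ) (hn : n < 511) :
    ev α (expo n) = α ^ n := by
  induction n with
  | zero => rw [expo_zero, ev_one, pow_zero]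
  | succ n ih =>
    obtain ⟨h1, h2⟩ := expo_step n (by omega)
    rw [h2]
    change ev α ((2 * expo n) ^^^ (529 * (expo n >>> 8))) = _
    rw [ev_xor, ev_double _ _ h1, ev_mod hα _ h1, ih (by omega), add_zero, pow_succ']

theorem one_add_pow {α : F9} (hα : α ^ 9 = α ^ 4 + 1) (n : ℕ) (hn : n < 511) (hn0 : n ≠ 0) :
    1 + α ^ n = α ^ zech n := by
  obtain ⟨-, h1, h2⟩ := zech_spec n hn hn0
  rw [← ev_expo hα n hn, ← ev_expo hα _ h1, ← h2]
  change _ = ev α (expo n ^^^ 1)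
  rw [ev_xor, ev_one, add_comm]

theorem root_ne_zero {α : F9} (hα : α ^ 9 = α ^ 4 + 1) : α ≠ 0 := by
  rintro rfl
  simp at hα

theorem pow_511 {x : F9} (hx : x ≠ 0) : x ^ 511 = 1 := by
  have : Fintype F9 := Fintype.ofFinite F9
  have h := FiniteField.pow_card_sub_one_eq_one x hx
  rwa [← Nat.card_eq_fintype_card, card_F9] at h

theorem pow_mod_511 {x : F9} (hx : x ≠ 0) (n : ℕ) : x ^ (n % 511) = x ^ n := by
  conv_rhs => rw [← Nat.mod_add_div n 511, pow_add, pow_mul, pow_511 hx, one_pow, mul_one]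

theorem dvd_of_pow_eq_one {α : F9} (hα : α ^ 9 = α ^ 4 + 1) {n : ℕ} (h : α ^ n = 1) :
    n % 511 = 0 := by
  by_contra hc
  have h1 := one_add_pow hα (n % 511) (Nat.mod_lt _ (by norm_num)) hc
  rw [pow_mod_511 (root_ne_zero hα), h, add_self] at h1
  exact pow_ne_zero _ (root_ne_zero hα) h1.symm

theorem pow_inj {α : F9} (hα : α ^ 9 = α ^ 4 + 1) {m n : ℕ} (hm : m < 511) (hn : n < 511)
    (h : α ^ m = α ^ n) : m = n := by
  have hα0 := root_ne_zero hα
  have h1 : α ^ (n + 511 - m) = 1 := by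
    have h2 : α ^ (n + 511 - m) * α ^ m = α ^ m := by
      rw [← pow_add, Nat.sub_add_cancel (by omega), pow_add, pow_511 hα0, mul_one, h]
    exact mul_right_cancel₀ (pow_ne_zero m hα0) (by rw [h2, one_mul])
  have := dvd_of_pow_eq_one hα h1
  omega

theorem exists_log {α : F9} (hα : α ^ 9 = α ^ 4 + 1) {x : F9} (hx : x ≠ 0) :
    ∃ n < 511, α ^ n = x := by
  classical
  have : Fintype F9 := Fintype.ofFinite F9
  have hsub : (Finset.range 511).image (fun n => α ^ n) ⊆ Finset.univ.erase 0 := by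
    intro y hy
    obtain ⟨n, -, rfl⟩ := Finset.mem_image.1 hy
    simpa using fun h => absurd h (root_ne_zero hα)
  have hcard : ((Finset.range 511).image (fun n => α ^ n)).card = 511 := by
    rw [Finset.card_image_of_injOn, Finset.card_range]
    intro m hm n hn h
    exact pow_inj hα (by simpa using hm) (by simpa using hn) h
  have heq := Finset.eq_of_subset_of_card_le hsub (by
    rw [hcard, Finset.card_erase_of_mem (Finset.mem_univ _), Finset.card_univ,
      ← Nat.card_eq_fintype_card, card_F9])
  have hx' : x ∈ (Finset.range 511).image (fun n => α ^ n) := by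
    rw [heq]; simpa using hx
  obtain ⟨n, hn, h⟩ := Finset.mem_image.1 hx'
  exact ⟨n, by simpa using hn, h⟩

theorem pow_dif {α : F9} (hα : α ^ 9 = α ^ 4 + 1) {a b : ℕ} (hb : b < 511) :
    α ^ dif a b = α ^ a / α ^ b := by
  have hα0 := root_ne_zero hα
  change α ^ ((a + 511 - b) % 511) = _
  rw [pow_mod_511 hα0, eq_div_iff (pow_ne_zero _ hα0), ← pow_add,
    Nat.sub_add_cancel (by omega), pow_add, pow_511 hα0, mul_one]

theorem pow_sm {α : F9} (hα : α ^ 9 = α ^ 4 + 1) (a b : ℕ) : α ^ sm a b = α ^ a * α ^ b := by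
  change α ^ ((a + b) % 511) = _
  rw [pow_mod_511 (root_ne_zero hα), pow_add]

theorem dif_lt (a b : ℕ) : dif a b < 511 := Nat.mod_lt _ (by norm_num)

theorem sm_lt (a b : ℕ) : sm a b < 511 := Nat.mod_lt _ (by norm_num)

/-! ### The subfield of order eight -/

theorem Kset_add {a b : F9} (ha : a ∈ Kset) (hb : b ∈ Kset) : a + b ∈ Kset := by
  change (a + b) ^ 8 = a + b
  have := add_pow_char_pow (p := 2) (n := 3) a b
  norm_num at this
  rw [this, show a ^ 8 = a from ha, show b ^ 8 = b from hb]

theorem Kset_mul {a b : F9} (ha : a ∈ Kset) (hb : b ∈ Kset) : a * b ∈ Kset := by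
  change (a * b) ^ 8 = a * b
  rw [mul_pow, show a ^ 8 = a from ha, show b ^ 8 = b from hb]

theorem Kset_inv {a : F9} (ha : a ∈ Kset) : a⁻¹ ∈ Kset := by
  change a⁻¹ ^ 8 = a⁻¹
  rw [inv_pow, show a ^ 8 = a from ha]

theorem Kset_div {a b : F9} (ha : a ∈ Kset) (hb : b ∈ Kset) : a / b ∈ Kset := by
  rw [div_eq_mul_inv]; exact Kset_mul ha (Kset_inv hb)

theorem Kset_zero : (0 : F9) ∈ Kset := by change (0 : F9) ^ 8 = 0; norm_num

theorem Kset_one : (1 : F9) ∈ Kset := one_pow 8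

theorem Kset_of_pow_seven {a : F9} (h : a ^ 7 = 1) : a ∈ Kset := by
  change a ^ 8 = a
  rw [pow_succ, h, one_mul]

theorem mem_pt_iff {x y : F9} (hx : x ≠ 0) : y ∈ pt x ↔ y / x ∈ Kset := by
  constructor
  · rintro ⟨c, hc, rfl⟩
    rwa [mul_div_cancel_left₀ _ hx]
  · intro h
    exact ⟨_, h, by field_simp⟩

theorem pt_eq_iff {x y : F9} (hx : x ≠ 0) (hy : y ≠ 0) : pt x = pt y ↔ y / x ∈ Kset := by
  constructor
  · intro h
    rw [← mem_pt_iff hx, h]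
    exact ⟨1, Kset_one, by simp⟩
  · intro h
    ext z
    rw [mem_pt_iff hx, mem_pt_iff hy]
    constructor
    · intro h'
      have := Kset_div h' h
      rwa [div_div_div_cancel_right₀ hx] at this
    · intro h'
      have := Kset_mul h' h
      rwa [div_mul_div_cancel₀ hy] at this

/-- Comparing the products of the elements of `S` and of `ν S = S`. -/
theorem pow_card_eq_one {S : Set F9} (h0 : (0 : F9) ∉ S) {ν : F9} (hν : ν ≠ 0)
    (h : ∀ x ∈ S, ν * x ∈ S) : ν ^ S.ncard = 1 := by
  classical
  have hf : S.Finite := Set.toFinite S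
  rw [Set.ncard_eq_toFinset_card S hf]
  have h1 : hf.toFinset.image (fun x => ν * x) = hf.toFinset := by
    refine Finset.eq_of_subset_of_card_le ?_ ?_
    · intro y hy
      obtain ⟨x, hx, rfl⟩ := Finset.mem_image.1 hy
      simpa using h x (by simpa using hx)
    · rw [Finset.card_image_of_injective _ (mul_right_injective₀ hν)]
  have h2 := Finset.prod_image (s := hf.toFinset) (g := fun x => ν * x) (f := fun x : F9 => x)
    (fun a _ b _ hab => mul_right_injective₀ hν hab)
  rw [h1, Finset.prod_mul_distrib, Finset.prod_const] at h2
  have h3 : ∏ x ∈ hf.toFinset, x ≠ 0 := by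
    refine Finset.prod_ne_zero_iff.2 fun x hx hx0 => h0 ?_
    subst hx0
    simpa using hx
  exact mul_right_cancel₀ h3 (by rw [one_mul]; exact h2.symm)

/-! ### Elementary properties of the design -/

theorem eq_of_add_eq_zero {x y : F9} (h : x + y = 0) : x = y := by
  linear_combination h - y * two_eq_zero

theorem add_ne_zero {x y : F9} (h : x ≠ y) : x + y ≠ 0 := fun h' => h (eq_of_add_eq_zero h')

theorem ncard_of_finrank {B : Submodule (ZMod 2) F9} {n : ℕ}
    (hB : Module.finrank (ZMod 2) B = n) : (B : Set F9).ncard = 2 ^ n := by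
  have := Module.natCard_eq_pow_finrank (K := ZMod 2) (V := B)
  rw [hB, Nat.card_zmod] at this
  exact this

/-- The seven nonzero combinations of `x`, `y`, `z`. -/
noncomputable def comb (x y z : F9) : List F9 := [x, y, x + y, z, z + x, z + y, z + (x + y)]

theorem comb_nodup {x y z : F9} (hx : x ≠ 0) (hy : y ≠ 0) (hxy : x ≠ y) (hz : z ≠ 0)
    (hzx : z ≠ x) (hzy : z ≠ y) (hzs : z ≠ x + y) : (0 :: comb x y z).Nodup := by
  have h2 := two_eq_zero
  have hs : x + y ≠ 0 := add_ne_zero hxy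
  have e1 : z + x ≠ 0 := add_ne_zero hzx
  have e2 : z + y ≠ 0 := add_ne_zero hzy
  have e3 : z + (x + y) ≠ 0 := add_ne_zero hzs
  simp only [comb, List.nodup_cons, List.mem_cons, List.not_mem_nil, or_false, not_or,
    not_false_eq_true, List.nodup_nil, and_true]
  refine ⟨⟨hx.symm, hy.symm, hs.symm, hz.symm, e1.symm, e2.symm, e3.symm⟩,
    ⟨hxy, fun h => ?_, hzx.symm, fun h => ?_, fun h => ?_, fun h => ?_⟩,
    ⟨fun h => ?_, hzy.symm, fun h => ?_, fun h => ?_, fun h => ?_⟩,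
    ⟨hzs.symm, fun h => ?_, fun h => ?_, fun h => ?_⟩,
    ⟨fun h => ?_, fun h => ?_, fun h => ?_⟩, ⟨fun h => ?_, fun h => ?_⟩, fun h => ?_⟩
  · exact hy (by linear_combination -h)
  · exact hz (by linear_combination -h)
  · exact hzs (by linear_combination -h + (- y) * h2)
  · exact hzy (by linear_combination -h - y * h2)
  · exact hx (by linear_combination -h)
  · exact hzs (by linear_combination -h - x * h2)
  · exact hz (by linear_combination -h)
  · exact hzx (by linear_combination -h - x * h2)
  · exact hzy (by linear_combination -h)
  · exact hzx (by linear_combination -h)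
  · exact hz (by linear_combination -h)
  · exact hx (by linear_combination -h)
  · exact hy (by linear_combination -h)
  · exact hs (by linear_combination -h)
  · exact hxy (by linear_combination h)
  · exact hy (by linear_combination -h)
  · exact hx (by linear_combination -h)

theorem eq_comb {B : Submodule (ZMod 2) F9} (hB : Module.finrank (ZMod 2) B = 3) {x y z : F9}
    (hx : x ≠ 0) (hy : y ≠ 0) (hxy : x ≠ y) (hz : z ≠ 0) (hzx : z ≠ x) (hzy : z ≠ y)
    (hzs : z ≠ x + y) (hxB : x ∈ B) (hyB : y ∈ B) (hzB : z ∈ B) (b : F9) :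
    b ∈ B ↔ b = 0 ∨ b ∈ comb x y z := by
  classical
  have hsub : ((0 :: comb x y z).toFinset : Set F9) ⊆ B := by
    intro b hb
    simp only [comb, List.coe_toFinset, Set.mem_ofPred_eq, List.mem_cons, List.not_mem_nil,
      or_false] at hb
    have hs := B.add_mem hxB hyB
    rcases hb with rfl | rfl | rfl | rfl | rfl | rfl | rfl | rfl
    exacts [B.zero_mem, hxB, hyB, hs, hzB, B.add_mem hzB hxB, B.add_mem hzB hyB, B.add_mem hzB hs]
  have hnd := comb_nodup hx hy hxy hz hzx hzy hzs
  have heq : ((0 :: comb x y z).toFinset : Set F9) = B := by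
    refine Set.eq_of_subset_of_ncard_le hsub ?_ (Set.toFinite _)
    rw [ncard_of_finrank hB, Set.ncard_coe_finset, List.toFinset_card_of_nodup hnd]
    norm_num [comb]
  rw [← SetLike.mem_coe, ← heq]
  simp only [List.coe_toFinset, Set.mem_ofPred_eq, List.mem_cons]

theorem exists_third {B : Submodule (ZMod 2) F9} (hB : Module.finrank (ZMod 2) B = 3) (x y : F9) :
    ∃ z ∈ B, z ≠ 0 ∧ z ≠ x ∧ z ≠ y ∧ z ≠ x + y := by
  classical
  by_contra hc
  push Not at hc
  have hsub : (B : Set F9) ⊆ (([0, x, y, x + y] : List F9).toFinset : Set F9) := by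
    intro b hb
    simp only [List.coe_toFinset, Set.mem_ofPred_eq, List.mem_cons, List.not_mem_nil, or_false]
    by_contra hn
    push Not at hn
    exact hn.2.2.2 (hc b hb hn.1 hn.2.1 hn.2.2.1)
  have h1 := Set.ncard_le_ncard hsub (Set.toFinite _)
  rw [ncard_of_finrank hB, Set.ncard_coe_finset] at h1
  have h2 := List.toFinset_card_le ([0, x, y, x + y] : List F9)
  simp only [List.length_cons, List.length_nil] at h2
  omega

/-- The properties of a cyclic design containing the spread of the sets `xK`, in terms of
elements: any two elements lie in a unique block, and the nonzero multiples of blocks are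
blocks. -/
structure Des (𝓑 : Set (Submodule (ZMod 2) F9)) : Prop where
  dim : ∀ B ∈ 𝓑, Module.finrank (ZMod 2) B = 3
  uniq : ∀ B ∈ 𝓑, ∀ B' ∈ 𝓑, ∀ x y, x ≠ 0 → y ≠ 0 → x ≠ y → x ∈ B → y ∈ B → x ∈ B' → y ∈ B' →
    B = B'
  exist : ∀ x y, x ≠ 0 → y ≠ 0 → x ≠ y → ∃ B ∈ 𝓑, x ∈ B ∧ y ∈ B
  scale : ∀ ν, ν ≠ 0 → ∀ B ∈ 𝓑, ∃ B' ∈ 𝓑, (B' : Set F9) = (fun x => ν * x) '' B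
  scattered : ∀ B ∈ 𝓑 \ SigmaSet, ∀ x ∈ B, ∀ y ∈ B, x ≠ 0 → y ≠ 0 → y / x ∈ Kset → y = x

theorem finrank_span_pair {x y : F9} (hx : x ≠ 0) (hy : y ≠ 0) (hxy : x ≠ y) :
    Module.finrank (ZMod 2) (Submodule.span (ZMod 2) ({x, y} : Set F9)) = 2 := by
  have hli : LinearIndependent (ZMod 2) ![x, y] := by
    rw [LinearIndependent.pair_iff]
    intro s t h
    have hz : ∀ a : ZMod 2, a = 0 ∨ a = 1 := by decide
    rcases hz s with rfl | rfl <;> rcases hz t with rfl | rfl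
    · exact ⟨rfl, rfl⟩
    · simp [hy] at h
    · simp [hx] at h
    · rw [one_smul, one_smul] at h
      exact absurd h (add_ne_zero hxy)
  have := finrank_span_eq_card hli
  rwa [Matrix.range_cons_cons_empty, Fintype.card_fin] at this

theorem des {g : F9} {𝓑 : Set (Submodule (ZMod 2) F9)} (h𝓑 : IsCyclicTwoAnalog g 𝓑)
    (hSig : SigmaSet ⊆ 𝓑) : Des 𝓑 := by
  obtain ⟨hg, hdim, hex, hsc⟩ := h𝓑
  have huniq : ∀ B ∈ 𝓑, ∀ B' ∈ 𝓑, ∀ x y, x ≠ 0 → y ≠ 0 → x ≠ y → x ∈ B → y ∈ B → x ∈ B' →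
      y ∈ B' → B = B' := by
    intro B hB B' hB' x y hx hy hxy h1 h2 h3 h4
    refine (hex _ (finrank_span_pair hx hy hxy)).unique ⟨hB, ?_⟩ ⟨hB', ?_⟩
    · rw [Submodule.span_le]
      rintro z (rfl | rfl) <;> assumption
    · rw [Submodule.span_le]
      rintro z (rfl | rfl) <;> assumption
  refine ⟨hdim, huniq, ?_, ?_, ?_⟩
  · intro x y hx hy hxy
    obtain ⟨B, hB, -⟩ := hex _ (finrank_span_pair hx hy hxy)
    exact ⟨B, hB.1, hB.2 (Submodule.subset_span (by simp)), hB.2 (Submodule.subset_span (by simp))⟩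
  · intro ν hν B hB
    obtain ⟨m, rfl⟩ := hg ν hν
    clear hν
    induction m with
    | zero => exact ⟨B, hB, by simp⟩
    | succ m ih =>
      obtain ⟨B', hB', h1⟩ := ih
      obtain ⟨B'', hB'', h2⟩ := hsc B' hB'
      refine ⟨B'', hB'', ?_⟩
      rw [h2, h1, Set.image_image]
      refine Set.image_congr fun x _ => ?_
      rw [pow_succ]; ring
  · rintro B ⟨hB, hBS⟩ x hxB y hyB hx hy hK
    by_contra hne
    let P : Submodule (ZMod 2) F9 :=
      { carrier := pt x
        zero_mem' := ⟨0, Kset_zero, by simp⟩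
        add_mem' := by
          rintro _ _ ⟨a, ha, rfl⟩ ⟨b, hb, rfl⟩
          exact ⟨a + b, Kset_add ha hb, by ring⟩
        smul_mem' := by
          intro c z hz
          have hc : ∀ a : ZMod 2, a = 0 ∨ a = 1 := by decide
          rcases hc c with rfl | rfl
          · rw [zero_smul]; exact ⟨0, Kset_zero, by simp⟩
          · rwa [one_smul] }
    have hP : P ∈ SigmaSet := ⟨x, hx, rfl⟩
    have hxP : x ∈ P := (mem_pt_iff hx).2 (by rw [div_self hx]; exact Kset_one)
    have hyP : y ∈ P := (mem_pt_iff hx).2 hK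
    have := huniq B hB P (hSig hP) x y hx hy (Ne.symm hne) hxB hyB hxP hyP
    exact hBS (this ▸ hP)

/-- A block outside `Σ` contains no two distinct planes that are multiples of each other, and no plane
of it has a nontrivial stabilizer in `F9ˣ`. -/
theorem Des.stab {𝓑 : Set (Submodule (ZMod 2) F9)} (hD : Des 𝓑) {B : Submodule (ZMod 2) F9}
    (hB : B ∈ 𝓑 \ SigmaSet) {x y ν : F9} (hx : x ≠ 0) (hy : y ≠ 0) (hxy : x ≠ y) (hν : ν ≠ 0)
    (h1 : x ∈ B) (h2 : y ∈ B) (h3 : ν * x ∈ B) (h4 : ν * y ∈ B) : ν = 1 := by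
  obtain ⟨B', hB', h5⟩ := hD.scale ν hν B hB.1
  have hBB : B' = B := by
    refine hD.uniq B' hB' B hB.1 (ν * x) (ν * y) (mul_ne_zero hν hx) (mul_ne_zero hν hy)
      (fun h => hxy (mul_right_injective₀ hν h)) ?_ ?_ h3 h4
    · rw [← SetLike.mem_coe, h5]; exact ⟨x, h1, rfl⟩
    · rw [← SetLike.mem_coe, h5]; exact ⟨y, h2, rfl⟩
  rw [hBB] at h5
  have h6 := pow_card_eq_one (S := (B : Set F9) \ {0}) (by simp) hν (by
    rintro z ⟨hz, hz0⟩
    refine ⟨?_, mul_ne_zero hν hz0⟩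
    rw [h5]; exact ⟨z, hz, rfl⟩)
  rw [Set.ncard_sdiff_singleton_of_mem B.zero_mem, ncard_of_finrank (hD.dim B hB.1)] at h6
  have h7 := hD.scattered B hB x h1 (ν * x) h3 hx (mul_ne_zero hν hx)
    (by rw [mul_div_cancel_right₀ _ hx]; exact Kset_of_pow_seven h6)
  exact mul_right_cancel₀ hx (by rw [h7, one_mul])

theorem Des.scale_not_mem {𝓑 : Set (Submodule (ZMod 2) F9)} (hD : Des 𝓑)
    {B : Submodule (ZMod 2) F9} (hB : B ∈ 𝓑 \ SigmaSet) {ν : F9} (hν : ν ≠ 0) :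
    ∃ B' ∈ 𝓑 \ SigmaSet, ∀ x, x ∈ B' ↔ ν⁻¹ * x ∈ B := by
  obtain ⟨B', hB', h⟩ := hD.scale ν hν B hB.1
  have h' : ∀ x, x ∈ B' ↔ ν⁻¹ * x ∈ B := by
    intro x
    rw [← SetLike.mem_coe, h]
    constructor
    · rintro ⟨b, hb, rfl⟩
      simpa [hν] using hb
    · intro hx
      exact ⟨_, hx, by simp [hν]⟩
  refine ⟨B', ⟨hB', ?_⟩, h'⟩
  rintro ⟨x, hx, hpt⟩
  refine hB.2 ⟨ν⁻¹ * x, mul_ne_zero (inv_ne_zero hν) hx, ?_⟩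
  ext z
  have h1 := h' (ν * z)
  rw [inv_mul_cancel_left₀ hν] at h1
  rw [SetLike.mem_coe, ← h1, ← SetLike.mem_coe, hpt, mem_pt_iff hx,
    mem_pt_iff (mul_ne_zero (inv_ne_zero hν) hx)]
  rw [show z / (ν⁻¹ * x) = ν * z / x by field_simp]

/-! ### The classes of planes under multiplication -/

/-- The logarithm to the base `α`. -/
noncomputable def lg (α x : F9) : ℕ :=
  open Classical in if h : ∃ n < 511, α ^ n = x then h.choose else 0

theorem lg_eq {α : F9} (hα : α ^ 9 = α ^ 4 + 1) {n : ℕ} (hn : n < 511) {x : F9} (h : α ^ n = x) :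
    lg α x = n := by
  have h' : ∃ n < 511, α ^ n = x := ⟨n, hn, h⟩
  rw [lg, dif_pos h']
  exact pow_inj hα h'.choose_spec.1 hn (h'.choose_spec.2.trans h.symm)

/-- The class of the plane `{0, x, y, x + y}` under multiplication by `F9ˣ`. -/
noncomputable def tid (α x y : F9) : ℕ := idOf (lg α (y / x))

theorem tid_eq {α : F9} (hα : α ^ 9 = α ^ 4 + 1) {n : ℕ} (hn : n < 511) {x y : F9} (hx : x ≠ 0)
    (h : y = x * α ^ n) : tid α x y = idOf n := by
  rw [tid, lg_eq hα hn]
  rw [h, mul_div_cancel_left₀ _ hx]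

theorem exists_ratio {α : F9} (hα : α ^ 9 = α ^ 4 + 1) {x y : F9} (hx : x ≠ 0) (hy : y ≠ 0)
    (hxy : x ≠ y) : ∃ n < 511, n ≠ 0 ∧ y = x * α ^ n := by
  obtain ⟨n, hn, h⟩ := exists_log hα (div_ne_zero hy hx)
  have h1 : y = x * α ^ n := by rw [h]; field_simp
  refine ⟨n, hn, ?_, h1⟩
  rintro rfl
  rw [pow_zero, mul_one] at h1
  exact hxy h1.symm

theorem ratio_swap {α : F9} (hα : α ^ 9 = α ^ 4 + 1) {x y : F9} {n : ℕ} (hn : n < 511)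
    (h : y = x * α ^ n) : x = y * α ^ (511 - n) := by
  rw [h, mul_assoc, ← pow_add, Nat.add_sub_cancel' hn.le, pow_511 (root_ne_zero hα), mul_one]

theorem ratio_add {α : F9} (hα : α ^ 9 = α ^ 4 + 1) {x y : F9} {n : ℕ} (hn : n < 511)
    (hn0 : n ≠ 0) (h : y = x * α ^ n) : x + y = x * α ^ zech n := by
  rw [h, ← one_add_pow hα n hn hn0, mul_add, mul_one]

theorem tid_swap {α : F9} (hα : α ^ 9 = α ^ 4 + 1) {x y : F9} (hx : x ≠ 0) (hy : y ≠ 0)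
    (hxy : x ≠ y) : tid α y x = tid α x y := by
  obtain ⟨n, hn, hn0, h⟩ := exists_ratio hα hx hy hxy
  rw [tid_eq hα hn hx h, tid_eq hα (by omega) hy (ratio_swap hα hn h)]
  exact (idOf_spec n hn hn0).1

theorem tid_add {α : F9} (hα : α ^ 9 = α ^ 4 + 1) {x y : F9} (hx : x ≠ 0) (hy : y ≠ 0)
    (hxy : x ≠ y) : tid α x (x + y) = tid α x y := by
  obtain ⟨n, hn, hn0, h⟩ := exists_ratio hα hx hy hxy
  rw [tid_eq hα hn hx h, tid_eq hα (zech_spec n hn hn0).2.1 hx (ratio_add hα hn hn0 h)]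
  exact (idOf_spec n hn hn0).2.1

theorem tid_mul {α x y u : F9} (hu : u ≠ 0) : tid α (u * x) (u * y) = tid α x y := by
  rw [tid, tid, mul_div_mul_left _ _ hu]

/-- Every plane contains `u` and `u α ^ r`, where `r` is the exponent representing its class. -/
theorem exists_rep {α : F9} (hα : α ^ 9 = α ^ 4 + 1) {x y : F9} (hx : x ≠ 0) (hy : y ≠ 0)
    (hxy : x ≠ y) : ∃ u ∈ [x, y, x + y], ∃ v ∈ [x, y, x + y],
      u ≠ v ∧ v = u * α ^ rep (tid α x y) := by
  obtain ⟨n, hn, hn0, h⟩ := exists_ratio hα hx hy hxy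
  have hr := rep_idOf n hn hn0
  rw [tid_eq hα hn hx h]
  have hz := zech_spec n hn hn0
  have hz' := zech_spec (511 - n) (by omega) (by omega)
  have h1 := ratio_swap hα hn h
  have h2 := ratio_add hα hn hn0 h
  have h3 := ratio_swap hα hz.2.1 h2
  have h4 := ratio_add hα (by omega) (by omega) h1
  rw [add_comm] at h4
  have h5 := ratio_swap hα hz'.2.1 h4
  have e1 : x ≠ x + y := by simpa using hy
  have e2 : y ≠ x + y := by simpa using hx
  simp only [List.mem_cons, List.not_mem_nil, or_false] at hr
  rcases hr with hr | hr | hr | hr | hr | hr <;> rw [hr]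
  · exact ⟨x, by simp, y, by simp, hxy, h⟩
  · exact ⟨y, by simp, x, by simp, hxy.symm, h1⟩
  · exact ⟨x, by simp, x + y, by simp, e1, h2⟩
  · exact ⟨x + y, by simp, x, by simp, e1.symm, h3⟩
  · exact ⟨y, by simp, x + y, by simp, e2, h4⟩
  · exact ⟨x + y, by simp, y, by simp, e2.symm, h5⟩

theorem Kset_pow_iff {α : F9} (hα : α ^ 9 = α ^ 4 + 1) (n : ℕ) : α ^ n ∈ Kset ↔ n % 73 = 0 := by
  have hα0 := root_ne_zero hα
  constructor
  · intro h
    have h1 : (α ^ n) ^ 8 = α ^ n := h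
    have h2 : α ^ (n * 7) = 1 := by
      rw [pow_mul]
      refine mul_right_cancel₀ (pow_ne_zero n hα0) ?_
      rw [← pow_succ, h1, one_mul]
    have := dvd_of_pow_eq_one hα h2
    omega
  · intro h
    refine Kset_of_pow_seven ?_
    rw [← pow_mul, show n * 7 = 511 * (n / 73) by omega, pow_mul, pow_511 hα0, one_pow]

theorem idOf_eq_zero : ∀ n < 511, n ≠ 0 → n % 73 = 0 → idOf n = 0 := by decide +kernel

/-! ### The Fano plane of a block -/

/-- Together with `fb` and `fc`: the seven lines of the Fano plane on `Fin 7`, the points being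
numbered as in `comb`. -/
def fa : Fin 7 → Fin 7 := ![0, 0, 0, 1, 1, 2, 2]

/-- See `fa`. -/
def fb : Fin 7 → Fin 7 := ![1, 3, 5, 3, 4, 3, 4]

/-- See `fa`. -/
def fc : Fin 7 → Fin 7 := ![2, 4, 6, 5, 6, 6, 5]

/-- Incidence of the line `k` with the point `p`. -/
abbrev On (k p : Fin 7) : Prop := p = fa k ∨ p = fb k ∨ p = fc k

theorem exists_line : ∀ p q, p ≠ q → ∃ k, On k p ∧ On k q := by decide

theorem line_unique : ∀ p q, p ≠ q → ∀ k k', On k p → On k q → On k' p → On k' q → k = k' := by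
  decide +kernel

/-- A numbering of the nonzero elements of a block as the points of the Fano plane. -/
structure Frame (B : Submodule (ZMod 2) F9) (e : Fin 7 → F9) : Prop where
  ne : ∀ p, e p ≠ 0
  inj : Function.Injective e
  mem : ∀ b, b ∈ B ↔ b = 0 ∨ ∃ p, e p = b
  line : ∀ k, e (fa k) + e (fb k) = e (fc k)

theorem Frame.mem' {B e} (hf : Frame B e) (p : Fin 7) : e p ∈ B := (hf.mem _).2 (Or.inr ⟨p, rfl⟩)

theorem fa_ne_fb : ∀ k, fa k ≠ fb k := by decide

theorem frame_comb {B : Submodule (ZMod 2) F9} (hB : Module.finrank (ZMod 2) B = 3) {x y z : F9}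
    (hx : x ≠ 0) (hy : y ≠ 0) (hxy : x ≠ y) (hz : z ≠ 0) (hzx : z ≠ x) (hzy : z ≠ y)
    (hzs : z ≠ x + y) (hxB : x ∈ B) (hyB : y ∈ B) (hzB : z ∈ B) :
    Frame B ![x, y, x + y, z, z + x, z + y, z + (x + y)] := by
  have hnd := comb_nodup hx hy hxy hz hzx hzy hzs
  have hget : ∀ p : Fin 7, ![x, y, x + y, z, z + x, z + y, z + (x + y)] p =
      (comb x y z).get p := by
    intro p; fin_cases p <;> rfl
  refine ⟨?_, ?_, ?_, ?_⟩
  · intro p h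
    rw [hget] at h
    exact (List.nodup_cons.1 hnd).1 (h ▸ List.get_mem _ _)
  · intro p q h
    rw [hget, hget] at h
    exact List.nodup_iff_injective_get.1 (List.nodup_cons.1 hnd).2 h
  · intro b
    rw [eq_comb hB hx hy hxy hz hzx hzy hzs hxB hyB hzB]
    refine or_congr Iff.rfl ?_
    rw [List.mem_iff_get]
    exact exists_congr fun p => Eq.congr_left (hget p).symm
  · have h2 := two_eq_zero
    intro k
    fin_cases k <;> simp [fa, fb, fc]
    · ring
    · ring
    · ring
    · ring
    · ring
    · linear_combination x * h2

/-- The classes of the planes contained in `B`. -/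
def cls (α : F9) (B : Submodule (ZMod 2) F9) : Set ℕ :=
  {n | ∃ x ∈ B, ∃ y ∈ B, x ≠ 0 ∧ y ≠ 0 ∧ x ≠ y ∧ n = tid α x y}

/-- The class of the plane on the line `k` of the Fano plane. -/
noncomputable def ltid (α : F9) (e : Fin 7 → F9) (k : Fin 7) : ℕ := tid α (e (fa k)) (e (fb k))

theorem Frame.ltid_eq {α : F9} (hα : α ^ 9 = α ^ 4 + 1) {B e} (hf : Frame B e) {k p q : Fin 7}
    (hpq : p ≠ q) (hp : On k p) (hq : On k q) : tid α (e p) (e q) = ltid α e k := by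
  have hab : e (fa k) ≠ e (fb k) := fun h => fa_ne_fb k (hf.inj h)
  have ha := hf.ne (fa k)
  have hb := hf.ne (fb k)
  have hc := hf.ne (fc k)
  have hl := hf.line k
  have h1 := tid_swap hα ha hb hab
  have h2 := tid_add hα ha hb hab
  have h3 := tid_add hα hb ha hab.symm
  rw [hl] at h2
  rw [add_comm, hl] at h3
  have hac : e (fa k) ≠ e (fc k) := by rw [← hl]; simpa using hb
  have hbc : e (fb k) ≠ e (fc k) := by rw [← hl]; simpa using ha
  have h4 := tid_swap hα ha hc hac
  have h5 := tid_swap hα hb hc hbc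
  rw [ltid]
  rcases hp with rfl | rfl | rfl <;> rcases hq with rfl | rfl | rfl
  · exact absurd rfl hpq
  · rfl
  · exact h2
  · exact h1
  · exact absurd rfl hpq
  · exact h3.trans h1
  · exact h4.trans h2
  · exact h5.trans (h3.trans h1)
  · exact absurd rfl hpq

theorem Frame.mem_cls {α : F9} (hα : α ^ 9 = α ^ 4 + 1) {B e} (hf : Frame B e) (n : ℕ) :
    n ∈ cls α B ↔ ∃ k, ltid α e k = n := by
  constructor
  · rintro ⟨x, hxB, y, hyB, hx, hy, hxy, rfl⟩
    obtain ⟨p, rfl⟩ := ((hf.mem x).1 hxB).resolve_left hx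
    obtain ⟨q, rfl⟩ := ((hf.mem y).1 hyB).resolve_left hy
    have hpq : p ≠ q := fun h => hxy (by rw [h])
    obtain ⟨k, h1, h2⟩ := exists_line p q hpq
    exact ⟨k, (hf.ltid_eq hα hpq h1 h2).symm⟩
  · rintro ⟨k, rfl⟩
    exact ⟨_, hf.mem' _, _, hf.mem' _, hf.ne _, hf.ne _, fun h => fa_ne_fb k (hf.inj h), rfl⟩

theorem Frame.rep_line {α : F9} (hα : α ^ 9 = α ^ 4 + 1) {B e} (hf : Frame B e) (k : Fin 7) :
    ∃ p q, p ≠ q ∧ On k p ∧ On k q ∧ e q = e p * α ^ rep (ltid α e k) := by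
  obtain ⟨u, hu, v, hv, huv, h⟩ := exists_rep hα (hf.ne (fa k)) (hf.ne (fb k))
    (fun h => fa_ne_fb k (hf.inj h))
  have key : ∀ u ∈ [e (fa k), e (fb k), e (fa k) + e (fb k)], ∃ p, On k p ∧ e p = u := by
    intro u hu
    simp only [List.mem_cons, List.not_mem_nil, or_false] at hu
    rcases hu with rfl | rfl | rfl
    · exact ⟨_, Or.inl rfl, rfl⟩
    · exact ⟨_, Or.inr (Or.inl rfl), rfl⟩
    · exact ⟨_, Or.inr (Or.inr rfl), (hf.line k).symm⟩
  obtain ⟨p, hp, rfl⟩ := key u hu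
  obtain ⟨q, hq, rfl⟩ := key v hv
  exact ⟨p, q, fun h => huv (by rw [h]), hp, hq, h⟩

theorem Frame.ltid_inj {α : F9} (hα : α ^ 9 = α ^ 4 + 1) {𝓑} (hD : Des 𝓑) {B e}
    (hB : B ∈ 𝓑 \ SigmaSet) (hf : Frame B e) : Function.Injective (ltid α e) := by
  intro k k' hk
  obtain ⟨p, q, hpq, hp, hq, h1⟩ := hf.rep_line hα k
  obtain ⟨p', q', -, hp', hq', h2⟩ := hf.rep_line hα k'
  have e1 : e p' / e p * e p = e p' := div_mul_cancel₀ _ (hf.ne p)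
  have e2 : e p' / e p * e q = e q' := by
    rw [h2, h1, ← hk, ← mul_assoc, e1]
  have hν := hD.stab hB (ν := e p' / e p) (hf.ne p) (hf.ne q) (fun h => hpq (hf.inj h))
    (div_ne_zero (hf.ne _) (hf.ne _)) (hf.mem' p) (hf.mem' q)
    (by rw [e1]; exact hf.mem' p') (by rw [e2]; exact hf.mem' q')
  rw [hν, one_mul] at e1 e2
  obtain rfl := hf.inj e1
  obtain rfl := hf.inj e2
  exact line_unique p q hpq k k' hp hq hp' hq'

theorem cls_range {α : F9} (hα : α ^ 9 = α ^ 4 + 1) {𝓑} (hD : Des 𝓑) {B}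
    (hB : B ∈ 𝓑 \ SigmaSet) {t : ℕ} (ht : t ∈ cls α B) : 1 ≤ t ∧ t ≤ 84 := by
  obtain ⟨x, hxB, y, hyB, hx, hy, hxy, rfl⟩ := ht
  obtain ⟨n, hn, hn0, h⟩ := exists_ratio hα hx hy hxy
  obtain ⟨-, -, h1, h2⟩ := idOf_spec n hn hn0
  rw [tid_eq hα hn hx h]
  refine ⟨?_, h1⟩
  by_contra hc
  have h3 := (Kset_pow_iff hα n).2 (h2 (by omega))
  refine hxy (hD.scattered B hB x hxB y hyB hx hy ?_).symm
  rwa [h, mul_div_cancel_left₀ _ hx]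

/-- The blocks containing a plane of class `t` are the multiples of the block through `1` and
`α ^ rep t`. -/
theorem exists_scale {α : F9} (hα : α ^ 9 = α ^ 4 + 1) {𝓑} (hD : Des 𝓑) {B}
    (hB : B ∈ 𝓑 \ SigmaSet) {t : ℕ} (ht : t ∈ cls α B) :
    ∃ u ≠ 0, ∃ S ∈ 𝓑 \ SigmaSet, 1 ∈ S ∧ α ^ rep t ∈ S ∧ (∀ x, x ∈ S ↔ u * x ∈ B) ∧
      cls α S = cls α B := by
  obtain ⟨x, hxB, y, hyB, hx, hy, hxy, rfl⟩ := ht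
  obtain ⟨u, hu, v, hv, huv, h⟩ := exists_rep hα hx hy hxy
  have key : ∀ u ∈ [x, y, x + y], u ≠ 0 ∧ u ∈ B := by
    intro u hu
    simp only [List.mem_cons, List.not_mem_nil, or_false] at hu
    rcases hu with rfl | rfl | rfl
    exacts [⟨hx, hxB⟩, ⟨hy, hyB⟩, ⟨add_ne_zero hxy, B.add_mem hxB hyB⟩]
  obtain ⟨hu0, huB⟩ := key u hu
  obtain ⟨hv0, hvB⟩ := key v hv
  obtain ⟨S, hS, hSB⟩ := hD.scale_not_mem hB (inv_ne_zero hu0)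
  rw [inv_inv] at hSB
  refine ⟨u, hu0, S, hS, ?_, ?_, hSB, ?_⟩
  · rw [hSB, mul_one]; exact huB
  · rw [hSB, ← h]; exact hvB
  · ext n
    constructor
    · rintro ⟨a, ha, b, hb, ha0, hb0, hab, rfl⟩
      exact ⟨u * a, (hSB a).1 ha, u * b, (hSB b).1 hb, mul_ne_zero hu0 ha0, mul_ne_zero hu0 hb0,
        fun h => hab (mul_right_injective₀ hu0 h), (tid_mul hu0).symm⟩
    · rintro ⟨a, ha, b, hb, ha0, hb0, hab, rfl⟩
      have hi := inv_ne_zero hu0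
      exact ⟨u⁻¹ * a, (hSB _).2 (by rwa [mul_inv_cancel_left₀ hu0]), u⁻¹ * b,
        (hSB _).2 (by rwa [mul_inv_cancel_left₀ hu0]), mul_ne_zero hi ha0, mul_ne_zero hi hb0,
        fun h => hab (mul_right_injective₀ hi h), (tid_mul hi).symm⟩

/-- The list `ids r l` describes the classes of the planes in the block of `1`, `α ^ r`, `α ^ l`. -/
theorem ids_spec {α : F9} (hα : α ^ 9 = α ^ 4 + 1) {𝓑} (hD : Des 𝓑) {B}
    (hB : B ∈ 𝓑 \ SigmaSet) {r l : ℕ} (hr : r < 511) (hr0 : r ≠ 0) (hl : l < 511)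
    (h1 : 1 ∈ B) (h2 : α ^ r ∈ B) (h3 : α ^ l ∈ B) (e1 : α ^ l ≠ 1) (e2 : α ^ l ≠ α ^ r)
    (e3 : α ^ l ≠ 1 + α ^ r) :
    (∀ n, n ∈ ids r l ↔ n ∈ cls α B) ∧ (ids r l).Nodup := by
  have hα0 := root_ne_zero hα
  have hr1 : (1 : F9) ≠ α ^ r := by
    intro h
    have := dvd_of_pow_eq_one hα h.symm
    omega
  have hl0 : l ≠ 0 := by rintro rfl; exact e1 (pow_zero _)
  have hrl : r ≠ l := by rintro rfl; exact e2 rfl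
  have hf := frame_comb (hD.dim B hB.1) one_ne_zero (pow_ne_zero r hα0) hr1 (pow_ne_zero l hα0)
    e1 e2 e3 h1 h2 h3
  have hzr := one_add_pow hα r hr hr0
  have hzl := one_add_pow hα l hl hl0
  have hsum : α ^ l + α ^ r = α ^ sm l (zech (dif r l)) := by
    have hd0 : dif r l ≠ 0 := by
      change (r + 511 - l) % 511 ≠ 0
      omega
    rw [pow_sm hα, ← one_add_pow hα _ (dif_lt _ _) hd0, pow_dif hα hl]
    have := pow_ne_zero l hα0
    field_simp
  have hids : ids r l = (List.finRange 7).map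
      (ltid α ![1, α ^ r, 1 + α ^ r, α ^ l, α ^ l + 1, α ^ l + α ^ r, α ^ l + (1 + α ^ r)]) := by
    have hz1 := (zech_spec r hr hr0).2.1
    have a2 : tid α 1 (α ^ l + α ^ r) = idOf (sm l (zech (dif r l))) :=
      tid_eq hα (sm_lt _ _) one_ne_zero (by rw [one_mul, hsum])
    have q : ∀ a b : ℕ, b < 511 → α ^ a = α ^ b * α ^ dif a b := by
      intro a b hb
      rw [pow_dif hα hb]
      have := pow_ne_zero b hα0
      field_simp
    have a3 : tid α (α ^ r) (α ^ l) = idOf (dif l r) :=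
      tid_eq hα (dif_lt _ _) (pow_ne_zero _ hα0) (q _ _ hr)
    have a4 : tid α (α ^ r) (α ^ l + 1) = idOf (dif (zech l) r) :=
      tid_eq hα (dif_lt _ _) (pow_ne_zero _ hα0) (by rw [add_comm, hzl]; exact q _ _ hr)
    have a5 : tid α (1 + α ^ r) (α ^ l) = idOf (dif l (zech r)) := by
      rw [hzr]
      exact tid_eq hα (dif_lt _ _) (pow_ne_zero _ hα0) (q _ _ hz1)
    have a6 : tid α (1 + α ^ r) (α ^ l + 1) = idOf (dif (zech l) (zech r)) := by
      rw [add_comm (α ^ l), hzr, hzl]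
      exact tid_eq hα (dif_lt _ _) (pow_ne_zero _ hα0) (q _ _ hz1)
    have a0 : tid α 1 (α ^ r) = idOf r := tid_eq hα hr one_ne_zero (one_mul _).symm
    have a1 : tid α 1 (α ^ l) = idOf l := tid_eq hα hl one_ne_zero (one_mul _).symm
    unfold ids
    simp only [force_eq]
    rw [← a0, ← a1, ← a2, ← a3, ← a4, ← a5, ← a6]
    rfl
  constructor
  · intro n
    rw [hf.mem_cls hα, hids, List.mem_map]
    simp
  · rw [hids]
    exact (List.nodup_finRange 7).map (hf.ltid_inj hα hD hB)

theorem exists_cols {α : F9} (hα : α ^ 9 = α ^ 4 + 1) {𝓑} (hD : Des 𝓑) {B}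
    (hB : B ∈ 𝓑 \ SigmaSet) : ∃ p ∈ rowTable, ∀ n, n ∈ cols p ↔ n ∈ cls α B := by
  classical
  have hne : ∃ t, t ∈ cls α B := by
    obtain ⟨x, hxB, hx, -⟩ := exists_third (hD.dim B hB.1) 0 0
    obtain ⟨y, hyB, hy, hyx, -⟩ := exists_third (hD.dim B hB.1) x 0
    exact ⟨_, x, hxB, y, hyB, hx, hy, hyx.symm, rfl⟩
  have ht := Nat.find_spec hne
  have hmin : ∀ a ∈ cls α B, Nat.find hne ≤ a := fun a ha => Nat.find_min' hne ha
  generalize Nat.find hne = t at ht hmin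
  obtain ⟨ht1, ht2⟩ := cls_range hα hD hB ht
  obtain ⟨u, hu, S, hS, h1, h2, -, hcls⟩ := exists_scale hα hD hB ht
  obtain ⟨z, hzS, hz, z1, z2, z3⟩ := exists_third (hD.dim S hS.1) 1 (α ^ rep t)
  obtain ⟨l, hl, rfl⟩ := exists_log hα hz
  obtain ⟨hr0, hr, -⟩ := rep_spec t (by omega)
  obtain ⟨hm, hnd⟩ := ids_spec hα hD hS hr hr0 hl h1 h2 hzS z1 z2 z3
  rw [hcls] at hm
  obtain ⟨p, hp, h⟩ := exists_row (by omega) ht2 hl (fun a ha => hmin a ((hm a).1 ha)) hnd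
  exact ⟨p, hp, fun n => (mem_iff_of_msk_eq h n).trans (hm n)⟩

theorem exists_base {α : F9} (hα : α ^ 9 = α ^ 4 + 1) {𝓑} (hD : Des 𝓑) {t : ℕ} (h1 : 1 ≤ t)
    (h2 : t ≤ 84) : ∃ S ∈ 𝓑 \ SigmaSet, 1 ∈ S ∧ α ^ rep t ∈ S := by
  have hα0 := root_ne_zero hα
  obtain ⟨hr0, hr, hid⟩ := rep_spec t (by omega)
  have hr1 : (1 : F9) ≠ α ^ rep t := by
    intro h
    have := dvd_of_pow_eq_one hα h.symm
    omega
  obtain ⟨S, hS, h3, h4⟩ := hD.exist 1 (α ^ rep t) one_ne_zero (pow_ne_zero _ hα0) hr1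
  refine ⟨S, ⟨hS, ?_⟩, h3, h4⟩
  rintro ⟨x, hx, hpt⟩
  rw [← SetLike.mem_coe, hpt, mem_pt_iff hx] at h3 h4
  have h5 := Kset_div h4 h3
  rw [div_div_div_cancel_right₀ hx, div_one, Kset_pow_iff hα] at h5
  have := idOf_eq_zero _ hr hr0 h5
  omega

/-- The blocks of the design give rise to a solution of the exact cover problem. -/
theorem exists_sol {α : F9} (hα : α ^ 9 = α ^ 4 + 1) {𝓑} (hD : Des 𝓑) :
    ∃ row, Sol row ∧ ∀ B ∈ 𝓑 \ SigmaSet, ∀ t ∈ cls α B, ∀ n, n ∈ cols (row t) ↔ n ∈ cls α B := by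
  classical
  have hS : ∀ t, ∃ S, 1 ≤ t → t ≤ 84 → S ∈ 𝓑 \ SigmaSet ∧ 1 ∈ S ∧ α ^ rep t ∈ S := by
    intro t
    by_cases h : 1 ≤ t ∧ t ≤ 84
    · obtain ⟨S, hS⟩ := exists_base hα hD h.1 h.2
      exact ⟨S, fun _ _ => hS⟩
    · exact ⟨⊥, fun h1 h2 => absurd ⟨h1, h2⟩ h⟩
  choose S hS using hS
  have hp : ∀ P : Set ℕ, ∃ p, (∃ B ∈ 𝓑 \ SigmaSet, P = cls α B) →
      p ∈ rowTable ∧ ∀ n, n ∈ cols p ↔ n ∈ P := by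
    intro P
    by_cases h : ∃ B ∈ 𝓑 \ SigmaSet, P = cls α B
    · obtain ⟨B, hB, rfl⟩ := h
      obtain ⟨p, hp⟩ := exists_cols hα hD hB
      exact ⟨p, fun _ => hp⟩
    · exact ⟨0, fun h' => absurd h' h⟩
  choose f hf using hp
  have hcls : ∀ B ∈ 𝓑 \ SigmaSet, ∀ t ∈ cls α B, cls α (S t) = cls α B := by
    intro B hB t ht
    obtain ⟨ht1, ht2⟩ := cls_range hα hD hB ht
    obtain ⟨hSt, h1, h2⟩ := hS t ht1 ht2
    obtain ⟨u, hu, S', hS', h3, h4, -, h5⟩ := exists_scale hα hD hB ht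
    have hr1 : (1 : F9) ≠ α ^ rep t := by
      intro h
      have := dvd_of_pow_eq_one hα h.symm
      have := rep_spec t (by omega)
      omega
    rw [← h5, hD.uniq _ hSt.1 _ hS'.1 1 (α ^ rep t) one_ne_zero
      (pow_ne_zero _ (root_ne_zero hα)) hr1 h1 h2 h3 h4]
  have hF : ∀ t, 1 ≤ t → t ≤ 84 → f (cls α (S t)) ∈ rowTable ∧
      ∀ n, n ∈ cols (f (cls α (S t))) ↔ n ∈ cls α (S t) := by
    intro t h1 h2
    exact hf _ ⟨S t, (hS t h1 h2).1, rfl⟩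
  refine ⟨fun t => f (cls α (S t)), ⟨fun t h1 h2 => (hF t h1 h2).1, ?_, ?_⟩, ?_⟩
  · intro t h1 h2
    rw [(hF t h1 h2).2]
    obtain ⟨-, h3, h4⟩ := hS t h1 h2
    obtain ⟨hr0, hr, hid⟩ := rep_spec t (by omega)
    refine ⟨1, h3, _, h4, one_ne_zero, pow_ne_zero _ (root_ne_zero hα), ?_, ?_⟩
    · intro h
      have := dvd_of_pow_eq_one hα h.symm
      omega
    · rw [tid_eq hα hr one_ne_zero (one_mul _).symm, hid]
  · intro t h1 h2 u hu
    rw [(hF t h1 h2).2] at hu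
    rw [hcls _ (hS t h1 h2).1 u hu]
  · intro B hB t ht n
    obtain ⟨ht1, ht2⟩ := cls_range hα hD hB ht
    change n ∈ cols (f _) ↔ _
    rw [(hF t ht1 ht2).2, hcls B hB t ht]

/-! ### No block is contained in a line -/

theorem frob_root {α : F9} (hα : α ^ 9 = α ^ 4 + 1) (k : ℕ) :
    (α ^ 2 ^ k) ^ 9 = (α ^ 2 ^ k) ^ 4 + 1 := by
  rw [← pow_mul, mul_comm, pow_mul, hα, add_pow_char_pow, one_pow, ← pow_mul, mul_comm, pow_mul]

theorem frob_pow {α : F9} (hα : α ^ 9 = α ^ 4 + 1) {e : ℕ} (he : e < 9) (n : ℕ) :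
    (α ^ 2 ^ (9 - e)) ^ frob e n = α ^ n := by
  have hα0 := root_ne_zero hα
  change (α ^ 2 ^ (9 - e)) ^ (2 ^ e * n % 511) = _
  rw [pow_mod_511 (pow_ne_zero _ hα0), pow_mul, ← pow_mul α, ← pow_add,
    Nat.sub_add_cancel he.le, show 2 ^ 9 = 511 + 1 by norm_num, pow_add, pow_511 hα0, one_mul,
    pow_one]

/-- No block outside `Σ` is spanned by `1`, a plane representative and a third element of the line
through them, as parametrized by `degExp`; this is where the exhaustive search enters. -/
theorem not_degenerate {α : F9} (hα : α ^ 9 = α ^ 4 + 1) {𝓑} (hD : Des 𝓑) {B}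
    (hB : B ∈ 𝓑 \ SigmaSet) {t i j : ℕ} (ht1 : 1 ≤ t) (ht2 : t ≤ 84) (hi : i < 7) (hj : j < 7)
    (h1 : 1 ∈ B) (h2 : α ^ rep t ∈ B) (h3 : α ^ degExp (rep t) i j ∈ B)
    (e1 : α ^ degExp (rep t) i j ≠ 1) (e2 : α ^ degExp (rep t) i j ≠ α ^ rep t)
    (e3 : α ^ degExp (rep t) i j ≠ 1 + α ^ rep t) : False := by
  obtain ⟨hr0, hr, -⟩ := rep_spec t (by omega)
  obtain ⟨hm, hnd⟩ := ids_spec hα hD hB hr hr0 (sm_lt _ _) h1 h2 h3 e1 e2 e3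
  obtain ⟨e, he, d, hd, hmsk⟩ := exists_degRow (by omega) ht2 hi hj
    (fun a ha => (cls_range hα hD hB ((hm a).1 ha)).1) hnd
  have hβ := frob_root hα (9 - e)
  have hr1 := frob_pow hα he (rep t)
  have hl1 := frob_pow hα he (degExp (rep t) i j)
  have hfr0 : frob e (rep t) ≠ 0 := by
    intro h
    rw [h, pow_zero] at hr1
    have := dvd_of_pow_eq_one hα hr1.symm
    omega
  obtain ⟨hm', -⟩ := ids_spec hβ hD hB (r := frob e (rep t)) (l := frob e (degExp (rep t) i j))
    (Nat.mod_lt _ (by norm_num)) hfr0 (Nat.mod_lt _ (by norm_num)) h1 (by rwa [hr1])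
    (by rwa [hl1]) (by rwa [hl1]) (by rwa [hl1, hr1]) (by rwa [hl1, hr1])
  obtain ⟨row, hs, hrow⟩ := exists_sol hβ hD
  obtain ⟨t0, ht0⟩ : ∃ t0, t0 ∈ ids (frob e (rep t)) (frob e (degExp (rep t) i j)) := by
    unfold ids
    simp only [force_eq]
    exact ⟨_, List.mem_cons_self⟩
  have ht0' := (hm' t0).1 ht0
  obtain ⟨k1, k2⟩ := cls_range hβ hD hB ht0'
  have hcols : row t0 = d := by
    refine degRow_unique d hd _ (hs.mem t0 k1 k2) (msk_eq_of_mem_iff fun n => ?_)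
    rw [hrow B hB t0 ht0', ← hm', mem_iff_of_msk_eq hmsk]
  exact hs.not_mem_degRows t0 k1 k2 (hcols ▸ hd)

theorem exists_Kset_log {α : F9} (hα : α ^ 9 = α ^ 4 + 1) {a : F9} (ha : a ∈ Kset) (h0 : a ≠ 0) :
    ∃ i < 7, α ^ (73 * i) = a := by
  obtain ⟨n, hn, rfl⟩ := exists_log hα h0
  have := (Kset_pow_iff hα n).1 ha
  exact ⟨n / 73, by omega, by rw [show 73 * (n / 73) = n by omega]⟩

/-- A line is spanned by any two of its elements that are independent over `K`. -/
theorem _root_.PGline.span {L : Set F9} (hL : PGline L) {p q z : F9} (hp : p ∈ L) (hq : q ∈ L)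
    (hz : z ∈ L) (hp0 : p ≠ 0) (hpq : q / p ∉ Kset) :
    ∃ a ∈ Kset, ∃ b ∈ Kset, z = p * a + q * b := by
  obtain ⟨x0, y0, -, -, rfl⟩ := hL
  obtain ⟨a1, ha1, b1, hb1, q1⟩ := hp
  obtain ⟨a2, ha2, b2, hb2, q2⟩ := hq
  obtain ⟨a3, ha3, b3, hb3, q3⟩ := hz
  -- Cramer's rule in characteristic two
  have hdet : a1 * b2 + a2 * b1 ≠ 0 := by
    intro h0
    have k1 : q * a1 + p * a2 = 0 := by
      linear_combination a1 * q2 + a2 * q1 + y0 * h0 + x0 * a1 * a2 * two_eq_zero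
    have k2 : q * b1 + p * b2 = 0 := by
      linear_combination b1 * q2 + b2 * q1 + x0 * h0 + y0 * b1 * b2 * two_eq_zero
    have k1' := eq_of_add_eq_zero k1
    have k2' := eq_of_add_eq_zero k2
    by_cases hA : a1 = 0
    · by_cases hB : b1 = 0
      · rw [hA, hB] at q1
        exact hp0 (by linear_combination q1)
      · refine hpq ?_
        rw [show q / p = b2 / b1 by rw [div_eq_div_iff hp0 hB, k2', mul_comm]]
        exact Kset_div hb2 hb1
    · refine hpq ?_
      rw [show q / p = a2 / a1 by rw [div_eq_div_iff hp0 hA, k1', mul_comm]]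
      exact Kset_div ha2 ha1
  have hdetK := Kset_add (Kset_mul ha1 hb2) (Kset_mul ha2 hb1)
  refine ⟨(a3 * b2 + a2 * b3) / (a1 * b2 + a2 * b1),
    Kset_div (Kset_add (Kset_mul ha3 hb2) (Kset_mul ha2 hb3)) hdetK,
    (a1 * b3 + a3 * b1) / (a1 * b2 + a2 * b1),
    Kset_div (Kset_add (Kset_mul ha1 hb3) (Kset_mul ha3 hb1)) hdetK, ?_⟩
  rw [mul_div_assoc', mul_div_assoc', ← add_div, eq_div_iff hdet]
  linear_combination (a1 * b2 + a2 * b1) * q3 - (a3 * b2 + a2 * b3) * q1 -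
    (a1 * b3 + a3 * b1) * q2 - (x0 * a1 * a2 * b3 + y0 * a3 * b1 * b2) * two_eq_zero

theorem not_subset_line {𝓑} (hD : Des 𝓑) {B} (hB : B ∈ 𝓑 \ SigmaSet) {L : Set F9}
    (hL : PGline L) : ¬ (B : Set F9) ⊆ L := by
  intro hBL
  obtain ⟨α, hα⟩ := exists_root
  have hα0 := root_ne_zero hα
  obtain ⟨x, hxB, hx, -⟩ := exists_third (hD.dim B hB.1) 0 0
  obtain ⟨y, hyB, hy, hyx, -⟩ := exists_third (hD.dim B hB.1) x 0
  have ht : tid α x y ∈ cls α B := ⟨x, hxB, y, hyB, hx, hy, hyx.symm, rfl⟩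
  generalize tid α x y = t at ht
  obtain ⟨ht1, ht2⟩ := cls_range hα hD hB ht
  obtain ⟨u, hu, S, hS, h1, h2, hSB, -⟩ := exists_scale hα hD hB ht
  obtain ⟨hr0, hr, hid⟩ := rep_spec t (by omega)
  obtain ⟨z, hzS, hz, z1, z2, z3⟩ := exists_third (hD.dim S hS.1) 1 (α ^ rep t)
  have hv0 : α ^ rep t ≠ 0 := pow_ne_zero _ hα0
  -- the elements of `S` are the `K`-combinations of `1` and `α ^ rep t`
  obtain ⟨a, ha, b, hb, hab⟩ : ∃ a ∈ Kset, ∃ b ∈ Kset, z = a + α ^ rep t * b := by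
    have hvK : α ^ rep t ∉ Kset := by
      rw [Kset_pow_iff hα]
      intro h
      have := idOf_eq_zero _ hr hr0 h
      omega
    obtain ⟨a, ha, b, hb, h⟩ := hL.span (hBL ((hSB _).1 h1)) (hBL ((hSB _).1 h2))
      (hBL ((hSB _).1 hzS)) (mul_ne_zero hu one_ne_zero)
      (by rwa [mul_div_mul_left _ _ hu, div_one])
    exact ⟨a, ha, b, hb, mul_left_cancel₀ hu (by rw [h]; ring)⟩
  have ha0 : a ≠ 0 := by
    rintro rfl
    refine z2 (hD.scattered S hS _ h2 z hzS hv0 hz ?_)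
    rwa [hab, zero_add, mul_div_cancel_left₀ _ hv0]
  have hb0 : b ≠ 0 := by
    rintro rfl
    refine z1 (hD.scattered S hS _ h1 z hzS one_ne_zero hz ?_)
    rwa [hab, mul_zero, add_zero, div_one]
  obtain ⟨i, hi, rfl⟩ := exists_Kset_log hα ha ha0
  obtain ⟨j, hj, rfl⟩ := exists_Kset_log hα hb hb0
  have hzl : α ^ degExp (rep t) i j = z := by
    have hq : α ^ (73 * i) * α ^ dif (sm (rep t) (73 * j)) (73 * i) =
        α ^ rep t * α ^ (73 * j) := by
      rw [pow_dif hα (by omega), pow_sm hα, mul_div_cancel₀ _ ha0]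
    have hd0 : dif (sm (rep t) (73 * j)) (73 * i) ≠ 0 := by
      intro h
      rw [h, pow_zero, mul_one] at hq
      exact hz (by rw [hab, ← hq, add_self])
    change α ^ sm (73 * i) (zech (dif (sm (rep t) (73 * j)) (73 * i))) = z
    rw [pow_sm hα, ← one_add_pow hα _ (dif_lt _ _) hd0, mul_add, mul_one, hq, hab]
  refine not_degenerate hα hD hS ht1 ht2 hi hj h1 h2 ?_ ?_ ?_ ?_ <;> rw [hzl]
  exacts [hzS, z1, z2, z3]

/-! ### Lines and their multiples -/

theorem _root_.PGline.add_mem {L : Set F9} (hL : PGline L) {u v : F9} (hu : u ∈ L) (hv : v ∈ L) :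
    u + v ∈ L := by
  obtain ⟨x, y, -, -, rfl⟩ := hL
  obtain ⟨a, ha, b, hb, rfl⟩ := hu
  obtain ⟨a', ha', b', hb', rfl⟩ := hv
  exact ⟨a + a', Kset_add ha ha', b + b', Kset_add hb hb', by ring⟩

theorem _root_.PGline.mul_mem {L : Set F9} (hL : PGline L) {u c : F9} (hu : u ∈ L) (hc : c ∈ Kset) :
    u * c ∈ L := by
  obtain ⟨x, y, -, -, rfl⟩ := hL
  obtain ⟨a, ha, b, hb, rfl⟩ := hu
  exact ⟨a * c, Kset_mul ha hc, b * c, Kset_mul hb hc, by ring⟩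

theorem _root_.PGline.pt_subset {L : Set F9} (hL : PGline L) {u : F9} : pt u ⊆ L ↔ u ∈ L := by
  constructor
  · intro h
    exact h ⟨1, Kset_one, by simp⟩
  · rintro h _ ⟨c, hc, rfl⟩
    exact hL.mul_mem h hc

theorem ncard_Kset : Kset.ncard = 8 := by
  obtain ⟨α, hα⟩ := exists_root
  have h1 : Kset \ {0} = (fun i => α ^ (73 * i)) '' (Finset.range 7 : Set ℕ) := by
    ext a
    constructor
    · rintro ⟨ha, ha0⟩
      obtain ⟨i, hi, h⟩ := exists_Kset_log hα ha ha0
      exact ⟨i, by simpa using hi, h⟩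
    · rintro ⟨i, -, rfl⟩
      exact ⟨(Kset_pow_iff hα _).2 (by omega), pow_ne_zero _ (root_ne_zero hα)⟩
  have h2 : (Kset \ {0}).ncard = 7 := by
    rw [h1, Set.InjOn.ncard_image, Set.ncard_coe_finset, Finset.card_range]
    intro i hi j hj h
    simp only [Finset.coe_range, Set.mem_Iio] at hi hj
    have := pow_inj hα (by omega) (by omega) h
    omega
  have h3 := Set.ncard_sdiff_singleton_add_one Kset_zero (Set.toFinite _)
  omega

theorem _root_.PGline.ncard {L : Set F9} (hL : PGline L) : L.ncard = 64 := by
  obtain ⟨x, y, hx, hy, rfl⟩ := hL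
  rw [mem_pt_iff hx] at hy
  have h : {z | ∃ a ∈ Kset, ∃ b ∈ Kset, z = x * a + y * b} =
      (fun p : F9 × F9 => x * p.1 + y * p.2) '' (Kset ×ˢ Kset) := by
    ext z
    constructor
    · rintro ⟨a, ha, b, hb, rfl⟩
      exact ⟨(a, b), ⟨ha, hb⟩, rfl⟩
    · rintro ⟨⟨a, b⟩, ⟨ha, hb⟩, rfl⟩
      exact ⟨a, ha, b, hb, rfl⟩
  rw [h, Set.InjOn.ncard_image, Set.ncard_prod, ncard_Kset]
  rintro ⟨a, b⟩ ⟨ha, hb⟩ ⟨a', b'⟩ ⟨ha', hb'⟩ h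
  change a ∈ Kset at ha
  change b ∈ Kset at hb
  change a' ∈ Kset at ha'
  change b' ∈ Kset at hb'
  change x * a + y * b = x * a' + y * b' at h
  have hbb : b = b' := by
    by_contra hne
    refine hy ?_
    have hs : b + b' ≠ 0 := add_ne_zero hne
    rw [show y / x = (a + a') / (b + b') by
      rw [div_eq_div_iff hx hs]
      linear_combination h + (y * b' - x * a) * two_eq_zero]
    exact Kset_div (Kset_add ha ha') (Kset_add hb hb')
  subst hbb
  have haa : a = a' := mul_left_cancel₀ hx (by linear_combination h)
  rw [haa]

/-- Two nonzero elements can be moved into a line by a common factor, since `64 * 64 > 512`. -/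
theorem _root_.PGline.exists_factor {L : Set F9} (hL : PGline L) {x y : F9} (hx : x ≠ 0)
    (hy : y ≠ 0) :
    ∃ c ≠ 0, c * x ∈ L ∧ c * y ∈ L := by
  obtain ⟨⟨u, v⟩, ⟨hu, hv⟩, ⟨u', v'⟩, ⟨hu', hv'⟩, hne, h⟩ :=
    Set.exists_ne_map_eq_of_ncard_lt_of_maps_to (s := L ×ˢ L) (t := Set.univ)
      (f := fun p : F9 × F9 => x⁻¹ * p.1 + y⁻¹ * p.2)
      (by rw [Set.ncard_prod, hL.ncard, Set.ncard_univ, card_F9]; norm_num)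
      (fun _ _ => Set.mem_univ _)
  change x⁻¹ * u + y⁻¹ * v = x⁻¹ * u' + y⁻¹ * v' at h
  have e1 : x⁻¹ * (u + u') * x = u + u' := by field_simp
  have h' : x⁻¹ * (u + u') = y⁻¹ * (v + v') := by
    linear_combination h + (x⁻¹ * u' - y⁻¹ * v) * two_eq_zero
  have e2 : x⁻¹ * (u + u') * y = v + v' := by rw [h']; field_simp
  refine ⟨x⁻¹ * (u + u'), ?_, ?_, ?_⟩
  · intro h0
    rw [h0, zero_mul] at e1 e2
    exact hne (by rw [eq_of_add_eq_zero e1.symm, eq_of_add_eq_zero e2.symm])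
  · rw [e1]; exact hL.add_mem hu hu'
  · rw [e2]; exact hL.add_mem hv hv'

/-- The factor in `PGline.exists_factor` is unique up to `K`. -/
theorem _root_.PGline.factor_unique {L : Set F9} (hL : PGline L) {x y c d : F9} (hx : x ≠ 0)
    (hxy : y / x ∉ Kset) (hc : c ≠ 0) (hd : d ≠ 0) (h1 : c * x ∈ L) (h2 : c * y ∈ L)
    (h3 : d * x ∈ L) (h4 : d * y ∈ L) : d / c ∈ Kset := by
  have hκ := div_ne_zero hd hc
  have hL0 : (0 : F9) ∈ L := by simpa using hL.mul_mem h1 Kset_zero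
  have h := pow_card_eq_one (S := L \ {0}) (by simp) hκ (by
    rintro z ⟨hz, hz0⟩
    refine ⟨?_, mul_ne_zero hκ hz0⟩
    obtain ⟨a, ha, b, hb, rfl⟩ := hL.span h1 h2 hz (mul_ne_zero hc hx)
      (by rwa [mul_div_mul_left _ _ hc])
    have := hL.add_mem (hL.mul_mem h3 ha) (hL.mul_mem h4 hb)
    rwa [show d / c * (c * x * a + c * y * b) = d * x * a + d * y * b by field_simp])
  rw [Set.ncard_sdiff_singleton_of_mem hL0, hL.ncard] at h
  refine Kset_of_pow_seven ?_
  have h5 := pow_511 hκ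
  rwa [show 511 = (64 - 1) * 8 + 7 by norm_num, pow_add, pow_mul, h, one_pow, one_mul] at h5

/-! ### The imprint -/

/-- The section with the line `L` of the block of points on the multiples by `c` of the `e p`. -/
def sec (e : Fin 7 → F9) (L : Set F9) (c : F9) : Set (Set F9) :=
  {P | ∃ p, c * e p ∈ L ∧ P = pt (c * e p)}

theorem imprint_eq {g : F9} (hg : ∀ x : F9, x ≠ 0 → ∃ m : ℕ, g ^ m = x) {B e} (hf : Frame B e)
    {L : Set F9} (hL : PGline L) : imprint (Worbit g (piB B)) L =
      {s | ∃ c ≠ 0, (sec e L c).ncard = 3 ∧ s = sec e L c} := by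
  have hg0 : g ≠ 0 := by
    rintro rfl
    obtain ⟨α, hα⟩ := exists_root
    obtain ⟨m, hm⟩ := hg α (root_ne_zero hα)
    cases m with
    | zero =>
      have := dvd_of_pow_eq_one hα (n := 1) (by rw [pow_one, ← hm, pow_zero])
      omega
    | succ m => exact root_ne_zero hα (by rw [← hm, zero_pow (Nat.succ_ne_zero m)])
  have hw : ∀ c : F9, wmap g (pt c) = pt (g * c) := by
    intro c
    ext z
    constructor
    · rintro ⟨_, ⟨a, ha, rfl⟩, rfl⟩
      exact ⟨a, ha, by ring⟩
    · rintro ⟨a, ha, rfl⟩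
      exact ⟨c * a, ⟨a, ha, rfl⟩, by ring⟩
  have horb : ∀ m : ℕ, (wact g)^[m] (piB B) = {P | ∃ p, P = pt (g ^ m * e p)} := by
    intro m
    induction m with
    | zero =>
      ext P
      constructor
      · rintro ⟨x, hxB, hx, rfl⟩
        obtain ⟨p, rfl⟩ := ((hf.mem x).1 hxB).resolve_left hx
        exact ⟨p, by simp⟩
      · rintro ⟨p, rfl⟩
        exact ⟨e p, hf.mem' p, hf.ne p, by simp⟩
    | succ m ih =>
      rw [Function.iterate_succ_apply', ih]
      ext P
      constructor
      · rintro ⟨_, ⟨p, rfl⟩, rfl⟩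
        exact ⟨p, by rw [hw, ← mul_assoc, ← pow_succ']⟩
      · rintro ⟨p, rfl⟩
        exact ⟨_, ⟨p, rfl⟩, by rw [hw, ← mul_assoc, ← pow_succ']⟩
  have hsec : ∀ m : ℕ, lineSec ((wact g)^[m] (piB B)) L = sec e L (g ^ m) := by
    intro m
    rw [horb]
    ext P
    constructor
    · rintro ⟨⟨p, rfl⟩, h⟩
      exact ⟨p, hL.pt_subset.1 h, rfl⟩
    · rintro ⟨p, h, rfl⟩
      exact ⟨⟨p, rfl⟩, hL.pt_subset.2 h⟩
  ext s
  constructor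
  · rintro ⟨_, ⟨m, rfl⟩, h1, rfl⟩
    rw [hsec] at h1 ⊢
    exact ⟨g ^ m, pow_ne_zero m hg0, h1, rfl⟩
  · rintro ⟨c, hc, h1, rfl⟩
    obtain ⟨m, rfl⟩ := hg c hc
    rw [← hsec] at h1 ⊢
    exact ⟨_, ⟨m, rfl⟩, h1, rfl⟩

theorem Frame.sum_line {B e} (hf : Frame B e) {k p q r : Fin 7} (hpq : p ≠ q) (hrp : r ≠ p)
    (hrq : r ≠ q) (hp : On k p) (hq : On k q) (hr : On k r) : e r = e p + e q := by
  have h := hf.line k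
  have h2 := two_eq_zero
  rcases hp with rfl | rfl | rfl <;> rcases hq with rfl | rfl | rfl <;>
    rcases hr with rfl | rfl | rfl <;> first
      | exact absurd rfl hpq
      | exact absurd rfl hrp
      | exact absurd rfl hrq
      | linear_combination -h
      | linear_combination h - e (fb k) * h2
      | linear_combination h - e (fa k) * h2

theorem fano_span : ∀ k p, ¬ On k p → ∀ q, On k q ∨ q = p ∨
    ∃ r k', On k r ∧ r ≠ p ∧ On k' p ∧ On k' r ∧ On k' q := by
  decide +kernel

theorem Frame.closed {B e} (hf : Frame B e) {L : Set F9} (hL : PGline L) {c : F9}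
    {k p q s : Fin 7} (hpq : p ≠ q) (hp : On k p) (hq : On k q) (hs : On k s)
    (h1 : c * e p ∈ L) (h2 : c * e q ∈ L) : c * e s ∈ L := by
  by_cases hsp : s = p
  · rwa [hsp]
  by_cases hsq : s = q
  · rwa [hsq]
  rw [hf.sum_line hpq hsp hsq hp hq hs, mul_add]
  exact hL.add_mem h1 h2

theorem ncard_on (k : Fin 7) : {p | On k p}.ncard = 3 := by
  have : {p | On k p} = (({fa k, fb k, fc k} : Finset (Fin 7)) : Set (Fin 7)) := by
    ext p; simp
  rw [this, Set.ncard_coe_finset]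
  clear this
  revert k
  decide

/-- As no block lies in a line, a multiple of a block which meets a line in a plane meets it in
nothing else. -/
theorem Frame.mem_iff_on {𝓑} (hD : Des 𝓑) {B e} (hB : B ∈ 𝓑 \ SigmaSet) (hf : Frame B e)
    {L : Set F9} (hL : PGline L) {c : F9} (hc : c ≠ 0) {k : Fin 7} (h1 : c * e (fa k) ∈ L)
    (h2 : c * e (fb k) ∈ L) (p : Fin 7) : c * e p ∈ L ↔ On k p := by
  have hk : ∀ p, On k p → c * e p ∈ L := fun p hp =>
    hf.closed hL (fa_ne_fb k) (Or.inl rfl) (Or.inr (Or.inl rfl)) hp h1 h2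
  refine ⟨fun hp => ?_, hk p⟩
  by_contra hn
  obtain ⟨B', hB', hBB⟩ := hD.scale_not_mem hB hc
  refine not_subset_line hD hB' hL fun x hx => ?_
  have hx' := (hBB x).1 hx
  have hxc : x = c * (c⁻¹ * x) := by rw [mul_inv_cancel_left₀ hc]
  rcases (hf.mem _).1 hx' with h | ⟨q, h⟩
  · rw [hxc, h, mul_zero]
    simpa using hL.mul_mem h1 Kset_zero
  · rw [hxc, ← h]
    rcases fano_span k p hn q with h | rfl | ⟨r, k', hr, hrp, h3, h4, h5⟩
    · exact hk q h
    · exact hp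
    · exact hf.closed hL hrp h4 h3 h5 (hk r hr) hp

theorem Frame.pt_inj {𝓑} (hD : Des 𝓑) {B e} (hB : B ∈ 𝓑 \ SigmaSet) (hf : Frame B e) {c : F9}
    (hc : c ≠ 0) {p q : Fin 7} (h : pt (c * e p) = pt (c * e q)) : p = q := by
  rw [pt_eq_iff (mul_ne_zero hc (hf.ne p)) (mul_ne_zero hc (hf.ne q)),
    mul_div_mul_left _ _ hc] at h
  exact hf.inj (hD.scattered B hB _ (hf.mem' p) _ (hf.mem' q) (hf.ne p) (hf.ne q) h).symm

theorem Frame.ncard_sec {𝓑} (hD : Des 𝓑) {B e} (hB : B ∈ 𝓑 \ SigmaSet) (hf : Frame B e)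
    {L : Set F9} {c : F9} (hc : c ≠ 0) : (sec e L c).ncard = {p | c * e p ∈ L}.ncard := by
  have : sec e L c = (fun p => pt (c * e p)) '' {p | c * e p ∈ L} := by
    ext P
    constructor
    · rintro ⟨p, hp, rfl⟩
      exact ⟨p, hp, rfl⟩
    · rintro ⟨p, hp, rfl⟩
      exact ⟨p, hp, rfl⟩
  rw [this, Set.ncard_image_of_injective _ fun p q h => hf.pt_inj hD hB hc h]

/-- The section of a line determines the line of the Fano plane it comes from. -/
theorem Frame.sec_inj {𝓑} (hD : Des 𝓑) {B e} (hB : B ∈ 𝓑 \ SigmaSet) (hf : Frame B e)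
    {L : Set F9} {c d : F9} (hc : c ≠ 0) (hd : d ≠ 0) {k k' : Fin 7}
    (hk : ∀ p, c * e p ∈ L ↔ On k p) (hk' : ∀ p, d * e p ∈ L ↔ On k' p)
    (h : sec e L c = sec e L d) : k = k' := by
  have key : ∀ p, On k p → ∃ q, On k' q ∧ ∃ a ∈ Kset, a ≠ 0 ∧ c * e p = a * (d * e q) ∧
      pt (c * e p) = pt (d * e q) := by
    intro p hp
    have h1 : pt (c * e p) ∈ sec e L c := ⟨p, (hk p).2 hp, rfl⟩
    rw [h] at h1
    obtain ⟨q, hq, h2⟩ := h1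
    have n1 := mul_ne_zero hc (hf.ne p)
    have n2 := mul_ne_zero hd (hf.ne q)
    refine ⟨q, (hk' q).1 hq, c * e p / (d * e q), (pt_eq_iff n2 n1).1 h2.symm,
      div_ne_zero n1 n2, ?_, h2⟩
    rw [div_mul_cancel₀ _ n2]
  obtain ⟨p, hp, a, ha, ha0, h1, g1⟩ := key (fa k) (Or.inl rfl)
  obtain ⟨q, hq, b, hb, hb0, h2, g2⟩ := key (fb k) (Or.inr (Or.inl rfl))
  obtain ⟨r, hr, m, hm, hm0, h3, g3⟩ := key (fc k) (Or.inr (Or.inr rfl))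
  have hne : ∀ k, fa k ≠ fb k ∧ fc k ≠ fa k ∧ fc k ≠ fb k := by decide
  have hpq : p ≠ q := by
    rintro rfl
    exact (hne k).1 (hf.pt_inj hD hB hc (g1.trans g2.symm))
  have hrp : r ≠ p := by
    rintro rfl
    exact (hne k).2.1 (hf.pt_inj hD hB hc (g3.trans g1.symm))
  have hrq : r ≠ q := by
    rintro rfl
    exact (hne k).2.2 (hf.pt_inj hD hB hc (g3.trans g2.symm))
  have hs := hf.sum_line hpq hrp hrq hp hq hr
  rw [← hf.line k, mul_add, h1, h2, hs] at h3
  have h4 : (a + m) * e p = (b + m) * e q := by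
    refine mul_left_cancel₀ hd ?_
    linear_combination h3 + (d * m * e p - d * b * e q) * two_eq_zero
  have hbm : b = m := by
    by_contra hbm
    have hbm' := add_ne_zero hbm
    have h5 := hD.scattered B hB _ (hf.mem' p) _ (hf.mem' q) (hf.ne p) (hf.ne q) (by
      rw [show e q / e p = (a + m) / (b + m) by
        rw [div_eq_div_iff (hf.ne p) hbm']; linear_combination -h4]
      exact Kset_div (Kset_add ha hm) (Kset_add hb hm))
    exact hpq (hf.inj h5).symm
  have ham : a = m := by
    rw [hbm, add_self, zero_mul] at h4
    exact eq_of_add_eq_zero ((mul_eq_zero.1 h4).resolve_right (hf.ne p))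
  subst hbm
  subst ham
  have e1 : c / (a * d) * e (fa k) = e p := by
    rw [div_mul_eq_mul_div, h1]; field_simp
  have e2 : c / (a * d) * e (fb k) = e q := by
    rw [div_mul_eq_mul_div, h2]; field_simp
  have hν := hD.stab hB (ν := c / (a * d)) (hf.ne _) (hf.ne _)
    (fun h => fa_ne_fb k (hf.inj h)) (div_ne_zero hc (mul_ne_zero ha0 hd))
    (hf.mem' _) (hf.mem' _) (by rw [e1]; exact hf.mem' p) (by rw [e2]; exact hf.mem' q)
  rw [hν, one_mul] at e1 e2
  rw [← hf.inj e1] at hp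
  rw [← hf.inj e2] at hq
  exact line_unique _ _ (fa_ne_fb k) k k' (Or.inl rfl) (Or.inr (Or.inl rfl)) hp hq

theorem exists_frame {𝓑} (hD : Des 𝓑) {B} (hB : B ∈ 𝓑) : ∃ e, Frame B e := by
  have hB := hD.dim B hB
  obtain ⟨x, hxB, hx, -⟩ := exists_third hB 0 0
  obtain ⟨y, hyB, hy, hyx, -⟩ := exists_third hB x 0
  obtain ⟨z, hzB, hz, h1, h2, h3⟩ := exists_third hB x y
  exact ⟨_, frame_comb hB hx hy hyx.symm hz h1 h2 h3 hxB hyB hzB⟩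

theorem ncard_imprint {g : F9} {𝓑 : Set (Submodule (ZMod 2) F9)} (h𝓑 : IsCyclicTwoAnalog g 𝓑)
    (hSig : SigmaSet ⊆ 𝓑) {L : Set F9} (hL : PGline L) {B} (hB : B ∈ 𝓑 \ SigmaSet) :
    (imprint (Worbit g (piB B)) L).ncard = 7 := by
  have hD := des h𝓑 hSig
  obtain ⟨e, hf⟩ := exists_frame hD hB.1
  rw [imprint_eq h𝓑.1 hf hL]
  have hc := fun k => hL.exists_factor (hf.ne (fa k)) (hf.ne (fb k))
  choose c hc0 hc1 hc2 using hc
  have hon := fun k => hf.mem_iff_on hD hB hL (hc0 k) (hc1 k) (hc2 k)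
  have hset : {s | ∃ c ≠ 0, (sec e L c).ncard = 3 ∧ s = sec e L c} =
      (fun k => sec e L (c k)) '' Set.univ := by
    ext s
    constructor
    · rintro ⟨d, hd, h3, rfl⟩
      rw [hf.ncard_sec hD hB hd] at h3
      obtain ⟨p, hp, q, hq, hpq⟩ := (Set.one_lt_ncard (Set.toFinite _)).1 (h3 ▸ by norm_num :
        1 < {p | d * e p ∈ L}.ncard)
      obtain ⟨k, hkp, hkq⟩ := exists_line p q hpq
      have hda := hf.closed hL hpq hkp hkq (Or.inl rfl) hp hq
      have hdb := hf.closed hL hpq hkp hkq (Or.inr (Or.inl rfl)) hp hq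
      have hond := hf.mem_iff_on hD hB hL hd hda hdb
      have hK : c k / d ∈ Kset := hL.factor_unique (hf.ne (fa k)) (fun h => fa_ne_fb k
        (hf.inj (hD.scattered B hB _ (hf.mem' _) _ (hf.mem' _) (hf.ne _) (hf.ne _) h).symm))
        hd (hc0 k) hda hdb (hc1 k) (hc2 k)
      refine ⟨k, Set.mem_univ k, ?_⟩
      have hpt : ∀ p, pt (c k * e p) = pt (d * e p) := by
        intro p
        refine ((pt_eq_iff (mul_ne_zero hd (hf.ne p)) (mul_ne_zero (hc0 k) (hf.ne p))).2 ?_).symm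
        rwa [mul_div_mul_right _ _ (hf.ne p)]
      ext P
      exact exists_congr fun p => by rw [hon, hond, hpt]
    · rintro ⟨k, -, rfl⟩
      refine ⟨c k, hc0 k, ?_, rfl⟩
      rw [hf.ncard_sec hD hB (hc0 k), ← ncard_on k]
      exact congrArg Set.ncard (Set.ext fun p => hon k p)
  rw [hset, Set.ncard_image_of_injective, Set.ncard_univ, Nat.card_fin]
  intro k k' h
  exact hf.sec_inj hD hB (hc0 k) (hc0 k') (hon k) (hon k') h

end Design

/-- For every line `ℓ` of `PG(2,8)` and every `W`-orbit `𝓞` on `𝓑'`, the imprint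
`I(𝓞,ℓ)` has exactly 7 elements. -/
theorem stmt18 (g : F9) (𝓑 : Set (Submodule (ZMod 2) F9))
    (h𝓑 : IsCyclicTwoAnalog g 𝓑) (hSig : SigmaSet ⊆ 𝓑)
    (L : Set F9) (hL : PGline L)
    (π : Set (Set F9)) (hπ : π ∈ Bprime 𝓑) :
    (imprint (Worbit g π) L).ncard = 7 := by
  obtain ⟨B, hB, rfl⟩ := hπ
  exact Design.ncard_imprint h𝓑 hSig hL hB
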